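/- arXiv:2501.11466 — 2 statements merged into one kernel-verified Lean document; each statement's English description precedes it below -/
import Mathlib

section
/- Let n ≥ 4 and 2 ≤ k ≤ n−2 be integers, let m be an integer, let A be an (n−k)×n matrix over ℂ with y_{i,j}(A) ≠ 0 for all 0 ≤ i ≤ n−k and 0 ≤ j ≤ k (where now y_{i,j}(A) = p_{σ^m J^ch_{i,j}}(A)), and let q ∈ ℂ. Then Σ_{i=1}^{n} ( p_{J_i⁺}(A)/p_{J_i}(A) ) · q^{δ_{i,k}} = ( y_{1,k−1}/y_{0,k} ) · q^{δ(m ≡ ⌈k/2⌉)} + ( y_{n−k−1,1}/y_{n−k,0} ) · q^{δ(m ≡ ⌈(n+k)/2⌉)} + Σ_{d=1−k}^{n−k−2} [ Σ_{(a,b) : a−b = d, 0 ≤ a ≤ n−k−1, 1 ≤ b ≤ k−1} ( y_{a,b+1} y_{a+1,b−1} )/( y_{a,b} y_{a+1,b} ) + Σ_{(a,b) : a−b = d, 1 ≤ a ≤ n−k−1, 1 ≤ b ≤ k} ( y_{a−1,b} y_{a+1,b−1} )/( y_{a,b−1} y_{a,b} ) ] · q^{ε_{m,d}}, where ε_{m,d}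 = δ(d even and m ≡ −d/2 mod n) + δ(d odd and m ≡ (d+1)/2 + k mod n), δ(P) = 1 if P holds and 0 otherwise, δ_{i,k} is the Kronecker delta, congruences of half-integers count only when the quantity is an integer, and all y's are evaluated at A. -/
open Finset

/-- The set `[m] = {1, …, m} ⊆ ℤ/nℤ` (with `[0] = ∅`). -/
def seg (n m : ℕ) : Finset (ZMod n) := (Finset.Icc 1 m).image (fun t : ℕ => (t : ZMod n))

/-- The Plücker coordinate `p_J(A)` of an `r×n` matrix `A` whose columns are indexed by
`ℤ/nℤ`: the determinant of the `r×r` submatrix of `A` formed by the columns indexed by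
`J`, ordered by the representatives `1, …, n` in increasing order (and `0` if `J` does
not have exactly `r` elements).  The auxiliary key `x ↦ (x−1).val` is order-isomorphic
to the representative in `{1, …, n}`. -/
noncomputable def plucker (n r : ℕ) (A : Matrix (Fin r) (ZMod n) ℂ)
    (J : Finset (ZMod n)) : ℂ :=
  if h : (J.image (fun x => (x - 1).val)).card = r then
    (A.submatrix id
      (fun i => ((((J.image (fun x => (x - 1).val)).orderIsoOfFin h i :
        (J.image (fun x => (x - 1).val))) : ℕ) : ZMod n) + 1)).det
  else 0

/-- The cyclic interval `J_i = {i+1, …, i+(n−k)} ⊆ ℤ/nℤ`. -/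
def Jcyc (n k : ℕ) (i : ZMod n) : Finset (ZMod n) :=
  (Finset.Icc 1 (n - k)).image (fun t : ℕ => i + (t : ZMod n))

/-- `J_i⁺ = (J_i ∖ {i+n−k}) ∪ {i+n−k+1}`. -/
def Jplus (n k : ℕ) (i : ZMod n) : Finset (ZMod n) :=
  insert (i + (((n - k + 1 : ℕ)) : ZMod n)) ((Jcyc n k i).erase (i + (((n - k : ℕ)) : ZMod n)))

/-- The checkboard label `J^ch_{i,j} = σ^{−⌈(i+j)/2⌉}( [i] ∪ ([n−k+j]∖[i+j]) )`. -/
def Jch (k n i j : ℕ) : Finset (ZMod n) :=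
  (seg n i ∪ (seg n (n - k + j) \ seg n (i + j))).image
    (fun x => x - (((i + j + 1) / 2 : ℕ) : ZMod n))

/-- The Plücker coordinates `y_{i,j}` attached to the checkboard graph. -/
noncomputable def ych (k n : ℕ) (A : Matrix (Fin (n - k)) (ZMod n) ℂ) (i j : ℕ) : ℂ :=
  plucker n (n - k) A (Jch k n i j)

/-- First sum appearing in the superpotential formulas:
`Σ_{a−b=d, 0 ≤ a ≤ n−k−1, 1 ≤ b ≤ k−1} (y_{a,b+1} y_{a+1,b−1})/(y_{a,b} y_{a+1,b})`. -/
noncomputable def sumA (k n : ℕ) (y : ℕ → ℕ → ℂ) (d : ℤ) : ℂ :=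
  ∑ p ∈ ((Finset.range (n - k)) ×ˢ (Finset.Icc 1 (k - 1))).filter
      (fun p => (p.1 : ℤ) - (p.2 : ℤ) = d),
    (y p.1 (p.2 + 1) * y (p.1 + 1) (p.2 - 1)) / (y p.1 p.2 * y (p.1 + 1) p.2)

/-- Second sum appearing in the superpotential formulas:
`Σ_{a−b=d, 1 ≤ a ≤ n−k−1, 1 ≤ b ≤ k} (y_{a−1,b} y_{a+1,b−1})/(y_{a,b−1} y_{a,b})`. -/
noncomputable def sumB (k n : ℕ) (y : ℕ → ℕ → ℂ) (d : ℤ) : ℂ :=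
  ∑ p ∈ ((Finset.Icc 1 (n - k - 1)) ×ˢ (Finset.Icc 1 k)).filter
      (fun p => (p.1 : ℤ) - (p.2 : ℤ) = d),
    (y (p.1 - 1) p.2 * y (p.1 + 1) (p.2 - 1)) / (y p.1 (p.2 - 1) * y p.1 p.2)

/-- The labels of the rotated checkboard graph `σ^m G^ch_{k,n}`. -/
def JchRot (k n : ℕ) (m : ℤ) (i j : ℕ) : Finset (ZMod n) :=
  (Jch k n i j).image (fun x => x + (m : ZMod n))

/-- The Plücker coordinates `y_{i,j}` attached to the rotated checkboard graph. -/
noncomputable def ychRot (k n : ℕ) (m : ℤ) (A : Matrix (Fin (n - k)) (ZMod n) ℂ)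
    (i j : ℕ) : ℂ :=
  plucker n (n - k) A (JchRot k n m i j)

/-- The exponent `ε_{m,d} = δ(d even and m ≡ −d/2 mod n) + δ(d odd and m ≡ (d+1)/2 + k mod n)`. -/
def epsExp (n k : ℕ) (m d : ℤ) : ℕ :=
  (if 2 ∣ d ∧ (m : ZMod n) = ((-(d / 2) : ℤ) : ZMod n) then 1 else 0) +
  (if ¬ 2 ∣ d ∧ (m : ZMod n) = (((d + 1) / 2 + (k : ℤ) : ℤ) : ZMod n) then 1 else 0)


namespace SP

/-- determinant of a list of rows -/
noncomputable def D (r : ℕ) (L : List (Fin r → ℂ)) : ℂ :=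
  Matrix.det (Matrix.of (fun (i j : Fin r) => L.getD i 0 j))

lemma D_swap {r : ℕ} (L1 L2 : List (Fin r → ℂ)) (x y : Fin r → ℂ) (h : L1.length + 1 < r) :
    D r (L1 ++ x :: y :: L2) = - D r (L1 ++ y :: x :: L2) := by
  have h1 := Matrix.det_permute (Equiv.swap (⟨L1.length, by omega⟩ : Fin r) ⟨L1.length + 1, h⟩)
    (Matrix.of (fun (i j : Fin r) => (L1 ++ y :: x :: L2).getD i 0 j))
  rw [Equiv.Perm.sign_swap (by simp)] at h1
  unfold D
  simp only [Units.val_neg, Units.val_one, Int.cast_neg, Int.cast_one, neg_mul, one_mul] at h1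
  rw [← h1]
  congr 1
  ext i j
  simp only [Matrix.of_apply, Matrix.submatrix_apply, id]
  by_cases hi : i = ⟨L1.length, by omega⟩
  · subst hi
    rw [Equiv.swap_apply_left]
    simp
  by_cases hi2 : i = ⟨L1.length + 1, by omega⟩
  · subst hi2
    rw [Equiv.swap_apply_right]
    simp
  rw [Equiv.swap_apply_of_ne_of_ne hi hi2]
  have e1 : (i : ℕ) ≠ L1.length := fun h => hi (Fin.ext h)
  have e2 : (i : ℕ) ≠ L1.length + 1 := fun h => hi2 (Fin.ext h)
  rcases lt_or_gt_of_ne e1 with h3 | h3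
  · rw [List.getD_append _ _ _ _ h3, List.getD_append _ _ _ _ h3]
  · rw [List.getD_append_right _ _ _ _ h3.le, List.getD_append_right _ _ _ _ h3.le]
    obtain ⟨t, ht⟩ : ∃ t, (i : ℕ) - L1.length = t + 2 := ⟨i - L1.length - 2, by omega⟩
    rw [ht]; simp

lemma D_move {r : ℕ} (L1 : List (Fin r → ℂ)) : ∀ (L0 L2 : List (Fin r → ℂ)) (x : Fin r → ℂ),
    L0.length + L1.length + L2.length + 1 = r →
    D r (L0 ++ (L1 ++ x :: L2)) = (-1) ^ L1.length * D r (L0 ++ x :: (L1 ++ L2)) := by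
  induction L1 with
  | nil => intros; simp
  | cons z L1 ih =>
    intro L0 L2 x h
    simp only [List.length_cons] at h
    have := ih (L0 ++ [z]) L2 x (by simp; omega)
    simp only [List.append_assoc, List.cons_append, List.nil_append] at this ⊢
    rw [this, D_swap _ _ _ _ (by omega), List.length_cons]
    ring

lemma D_eq_zero {r : ℕ} (L : List (Fin r → ℂ)) (i j : ℕ) (hi : i < r) (hj : j < r) (hij : i ≠ j)
    (c : ℂ) (h : L.getD i 0 = c • L.getD j 0) : D r L = 0 := by
  have h2 := Matrix.det_updateRow_add_smul_self
    (Matrix.of (fun (i j : Fin r) => L.getD i 0 j)) (i := ⟨i, hi⟩) (j := ⟨j, hj⟩)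
    (by simpa using hij) (-c)
  unfold D
  rw [← h2]
  apply Matrix.det_eq_zero_of_row_eq_zero ⟨i, hi⟩
  intro t
  rw [Matrix.updateRow_self]
  have := congrFun h t
  simp only [Pi.smul_apply, smul_eq_mul] at this
  simp only [Pi.add_apply, Pi.smul_apply, smul_eq_mul, Matrix.of_apply]
  rw [this]; ring

lemma D_three {r : ℕ} (S : List (Fin r → ℂ)) (a b c d : Fin r → ℂ) (h : S.length + 2 = r) :
    D r (a :: b :: S) * D r (c :: d :: S) =
      D r (c :: b :: S) * D r (a :: d :: S) + D r (a :: c :: S) * D r (b :: d :: S) := by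
  obtain ⟨t, rfl⟩ : ∃ t, r = t + 2 := ⟨S.length, h.symm⟩
  set M : Matrix (Fin (t + 2)) (Fin (t + 2)) ℂ :=
    Matrix.of (fun i j => (a :: b :: S).getD i 0 j) with hM
  set f : (Fin (t + 2) → ℂ) →ₗ[ℂ] ℂ :=
    (Matrix.detRowAlternating (R := ℂ) (n := Fin (t + 2))).toMultilinearMap.toLinearMap
      (Matrix.of (fun i j => (a :: d :: S).getD i 0 j)) 0 with hf
  have hfx : ∀ x, f x = D _ (x :: d :: S) := by
    intro x
    change Matrix.det (Matrix.updateRow _ 0 x) = _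
    unfold D
    congr 1
    ext i j
    refine Fin.cases ?_ (fun i => ?_) i
    · simp
    · simp
  have h1 := Matrix.mulVec_cramer M.transpose c
  have h2 : M.transpose.mulVec (M.transpose.cramer c) = ∑ i, (M.updateRow i c).det • M i := by
    ext j
    simp only [Matrix.mulVec, dotProduct, Matrix.transpose_apply, Finset.sum_apply, Pi.smul_apply,
      smul_eq_mul, Matrix.cramer_transpose_apply]
    exact Finset.sum_congr rfl fun _ _ => mul_comm _ _
  rw [h2, Matrix.det_transpose] at h1
  have h3 := congrArg f h1
  rw [map_sum, map_smul, hfx, smul_eq_mul, Fin.sum_univ_succ, Fin.sum_univ_succ,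
    Finset.sum_eq_zero] at h3
  · rw [map_smul, map_smul, hfx, hfx, smul_eq_mul, smul_eq_mul, add_zero] at h3
    have e0 : M 0 = a := by ext j; simp [hM]
    have e1 : M (Fin.succ 0) = b := by ext j; simp [hM]
    have e2 : (M.updateRow 0 c).det = D _ (c :: b :: S) := by
      unfold D; congr 1; ext i j
      refine Fin.cases ?_ (fun i => ?_) i
      · simp
      · simp [hM]
    have e3 : (M.updateRow (Fin.succ 0) c).det = D _ (a :: c :: S) := by
      unfold D; congr 1; ext i j
      refine Fin.cases ?_ (fun i => ?_) i
      · simp [hM, Matrix.updateRow_apply]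
      · refine Fin.cases ?_ (fun i => ?_) i
        · simp
        · simp [hM, Matrix.updateRow_apply, Fin.ext_iff]
    rw [e0, e1, e2, e3] at h3
    rw [← h3.symm]; rfl
  · intro i _
    rw [map_smul, hfx, D_eq_zero _ 0 (i.succ.succ : Fin (t+2)) (by omega) (by omega) (by simp) 1,
      smul_zero]
    rw [one_smul]
    ext j
    simp [hM]

/-- normal forms -/
lemma nf_uf {r : ℕ} (S1 S2 : List (Fin r → ℂ)) (u f : Fin r → ℂ)
    (h : S1.length + S2.length + 2 = r) :
    D r (u :: (S1 ++ f :: S2)) = (-1) ^ S1.length * D r (u :: f :: (S1 ++ S2)) := by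
  have := D_move S1 [u] S2 f (by simp; omega)
  simpa using this

lemma nf_ue {r : ℕ} (S1 S2 : List (Fin r → ℂ)) (u f : Fin r → ℂ)
    (h : S1.length + S2.length + 2 = r) :
    D r (u :: (S1 ++ (S2 ++ [f]))) = (-1) ^ S1.length * (-1) ^ S2.length *
      D r (u :: f :: (S1 ++ S2)) := by
  have := D_move (S1 ++ S2) [u] [] f (by simp; omega)
  simpa [pow_add] using this

lemma nf_fg {r : ℕ} (S1 S2 : List (Fin r → ℂ)) (f g : Fin r → ℂ)
    (h : S1.length + S2.length + 2 = r) :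
    D r (S1 ++ f :: g :: S2) = D r (f :: g :: (S1 ++ S2)) := by
  have := D_move S1 [] (g :: S2) f (by simp; omega)
  have h2 := nf_uf S1 S2 f g h
  simp only [List.nil_append] at this
  rw [this, h2, ← mul_assoc, ← mul_pow]; simp

lemma nf_fe {r : ℕ} (S1 S2 : List (Fin r → ℂ)) (f e : Fin r → ℂ)
    (h : S1.length + S2.length + 2 = r) :
    D r (S1 ++ f :: (S2 ++ [e])) = (-1) ^ S2.length * D r (f :: e :: (S1 ++ S2)) := by
  have := D_move S1 [] (S2 ++ [e]) f (by simp; omega)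
  have h2 := nf_ue S1 S2 f e h
  simp only [List.nil_append] at this
  rw [this, h2, ← mul_assoc, ← mul_assoc, ← mul_pow]; simp

lemma nf_ee {r : ℕ} (S1 S2 : List (Fin r → ℂ)) (f e : Fin r → ℂ)
    (h : S1.length + S2.length + 2 = r) :
    D r (S1 ++ (S2 ++ [f, e])) = D r (f :: e :: (S1 ++ S2)) := by
  have := nf_fg (S1 ++ S2) [] f e (by simp; omega)
  simpa using this

lemma D_swap0 {r : ℕ} (S : List (Fin r → ℂ)) (x y : Fin r → ℂ) (h : S.length + 2 = r) :
    D r (x :: y :: S) = - D r (y :: x :: S) := D_swap [] S x y (by simp; omega)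

lemma PL1 {r : ℕ} (S1 S2 : List (Fin r → ℂ)) (u f f' e : Fin r → ℂ)
    (h : S1.length + S2.length + 2 = r) :
    D r (u :: (S1 ++ f' :: S2)) * D r (S1 ++ f :: (S2 ++ [e])) =
      D r (u :: (S1 ++ f :: S2)) * D r (S1 ++ f' :: (S2 ++ [e])) +
      D r (u :: (S1 ++ (S2 ++ [e]))) * D r (S1 ++ f :: f' :: S2) := by
  rw [nf_uf _ _ _ _ h, nf_uf _ _ _ _ h, nf_fe _ _ _ _ h, nf_fe _ _ _ _ h, nf_ue _ _ _ _ h,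
    nf_fg _ _ _ _ h]
  have h' : (S1 ++ S2).length + 2 = r := by simpa using h
  have := D_three (S1 ++ S2) u f' f e h'
  linear_combination ((-1) ^ S1.length * (-1) ^ S2.length) * this

lemma PL2 {r : ℕ} (S1 S2 : List (Fin r → ℂ)) (f f' g e : Fin r → ℂ)
    (h : S1.length + S2.length + 2 = r) :
    D r (S1 ++ f :: g :: S2) * D r (S1 ++ f' :: (S2 ++ [e])) =
      D r (S1 ++ f :: f' :: S2) * D r (S1 ++ g :: (S2 ++ [e])) +
      D r (S1 ++ f :: (S2 ++ [e])) * D r (S1 ++ f' :: g :: S2) := by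
  rw [nf_fg _ _ _ _ h, nf_fg _ _ _ _ h, nf_fg _ _ _ _ h, nf_fe _ _ _ _ h, nf_fe _ _ _ _ h,
    nf_fe _ _ _ _ h]
  have h' : (S1 ++ S2).length + 2 = r := by simpa using h
  have := D_three (S1 ++ S2) f f' g e h'
  rw [D_swap0 _ g f' h'] at this
  linear_combination (-((-1) ^ S2.length)) * this

lemma PL3 {r : ℕ} (S1 S2 : List (Fin r → ℂ)) (f g e e' : Fin r → ℂ)
    (h : S1.length + S2.length + 2 = r) :
    D r (S1 ++ f :: (S2 ++ [e])) * D r (S1 ++ g :: (S2 ++ [e'])) =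
      D r (S1 ++ f :: g :: S2) * D r (S1 ++ (S2 ++ [e, e'])) +
      D r (S1 ++ f :: (S2 ++ [e'])) * D r (S1 ++ g :: (S2 ++ [e])) := by
  rw [nf_fg _ _ _ _ h, nf_ee _ _ _ _ h, nf_fe _ _ _ _ h, nf_fe _ _ _ _ h, nf_fe _ _ _ _ h,
    nf_fe _ _ _ _ h]
  have h' : (S1 ++ S2).length + 2 = r := by simpa using h
  have := D_three (S1 ++ S2) f e g e' h'
  have hs : ((-1 : ℂ) ^ S2.length) * (-1) ^ S2.length = 1 := by rw [← mul_pow]; simp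
  linear_combination this + (D r (f :: e :: (S1 ++ S2)) * D r (g :: e' :: (S1 ++ S2)) -
    D r (f :: e' :: (S1 ++ S2)) * D r (g :: e :: (S1 ++ S2))) * hs

lemma PL4 {r : ℕ} (S1 S2 : List (Fin r → ℂ)) (u f e e' : Fin r → ℂ)
    (h : S1.length + S2.length + 2 = r) :
    D r (u :: (S1 ++ (S2 ++ [e]))) * D r (S1 ++ f :: (S2 ++ [e'])) =
      D r (u :: (S1 ++ f :: S2)) * D r (S1 ++ (S2 ++ [e, e'])) +
      D r (u :: (S1 ++ (S2 ++ [e']))) * D r (S1 ++ f :: (S2 ++ [e])) := by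
  rw [nf_uf _ _ _ _ h, nf_ee _ _ _ _ h, nf_fe _ _ _ _ h, nf_fe _ _ _ _ h, nf_ue _ _ _ _ h,
    nf_ue _ _ _ _ h]
  have h' : (S1 ++ S2).length + 2 = r := by simpa using h
  have := D_three (S1 ++ S2) u e f e' h'
  have hs : ((-1 : ℂ) ^ S2.length) * (-1) ^ S2.length = 1 := by rw [← mul_pow]; simp
  linear_combination (-1) ^ S1.length * this +
    (-1) ^ S1.length * (D r (u :: e :: (S1 ++ S2)) * D r (f :: e' :: (S1 ++ S2)) -
    D r (u :: e' :: (S1 ++ S2)) * D r (f :: e :: (S1 ++ S2))) * hs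

lemma D_smul0 {r : ℕ} (L : List (Fin r → ℂ)) (x : Fin r → ℂ) (c : ℂ) (hr : 0 < r) :
    D r ((c • x) :: L) = c * D r (x :: L) := by
  obtain ⟨t, rfl⟩ : ∃ t, r = t + 1 := ⟨r - 1, by omega⟩
  have := Matrix.det_updateRow_smul
    (Matrix.of (fun (i j : Fin (t+1)) => (x :: L).getD i 0 j)) 0 c x
  unfold D
  convert this using 2
  · ext i j
    refine Fin.cases ?_ (fun i => ?_) i
    · simp
    · simp
  · congr 1
    ext i j
    refine Fin.cases ?_ (fun i => ?_) i
    · simp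
    · simp

/-- twisted periodic column sequence -/
noncomputable def vv (n r : ℕ) (A : Matrix (Fin r) (ZMod n) ℂ) (t : ℤ) : Fin r → ℂ :=
  fun j => ((-1 : ℂ) ^ (r - 1)) ^ ((t - 1) / (n : ℤ)) * A j (t : ZMod n)

lemma vv_per {n r : ℕ} (hn : 0 < n) (A : Matrix (Fin r) (ZMod n) ℂ) (t : ℤ) :
    vv n r A (t + n) = ((-1 : ℂ) ^ (r - 1)) • vv n r A t := by
  ext j
  have h : (t + n - 1) / (n : ℤ) = (t - 1) / (n : ℤ) + 1 := by
    rw [show t + n - 1 = (t - 1) + n by ring, Int.add_ediv_of_dvd_right (dvd_refl _), Int.ediv_self (by omega)]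
  have h0 : ((-1 : ℂ) ^ (r - 1)) ≠ 0 := pow_ne_zero _ (by norm_num)
  simp only [vv, h, Pi.smul_apply, smul_eq_mul, zpow_add₀ h0, zpow_one]
  simp
  ring

noncomputable def Dv (n r : ℕ) (A : Matrix (Fin r) (ZMod n) ℂ) (L : List ℤ) : ℂ :=
  D r (L.map (vv n r A))

lemma Dv_rot {n r : ℕ} (hn : 0 < n) (A : Matrix (Fin r) (ZMod n) ℂ) (x : ℤ) (L : List ℤ)
    (h : L.length + 1 = r) : Dv n r A (L ++ [x + n]) = Dv n r A (x :: L) := by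
  unfold Dv
  have := D_move (L.map (vv n r A)) [] [] (vv n r A (x + n)) (by simpa using h)
  simp only [List.nil_append, List.append_nil] at this
  rw [List.map_append, List.map_cons, List.map_nil, this, vv_per hn, D_smul0 _ _ _ (by omega),
    ← mul_assoc, List.length_map, ← pow_add, List.map_cons]
  have e : L.length + (r - 1) = 2 * L.length := by omega
  rw [e, pow_mul]; simp

lemma Dv_rotAll {n r : ℕ} (hn : 0 < n) (A : Matrix (Fin r) (ZMod n) ℂ) (L1 : List ℤ) :
    ∀ (L2 : List ℤ), L1.length + L2.length = r →
      Dv n r A (L1 ++ L2) = Dv n r A (L2 ++ L1.map (fun t => t + (n : ℤ))) := by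
  induction L1 with
  | nil => intros; simp
  | cons x L ih =>
    intro L2 h
    simp only [List.length_cons] at h
    rw [List.cons_append, ← Dv_rot hn A x _ (by simp; omega), List.append_assoc,
      ih _ (by simp; omega)]
    simp

lemma plucker_base {n r : ℕ} (hn : 0 < n) (A : Matrix (Fin r) (ZMod n) ℂ) (L : List ℤ)
    (hs : L.Pairwise (· < ·)) (hw : ∀ t ∈ L, 0 < t ∧ t ≤ n) (hl : L.length = r) :
    plucker n r A (L.map (fun t : ℤ => (t : ZMod n))).toFinset = Dv n r A L := by
  have hne : NeZero n := ⟨hn.ne'⟩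
  have key : ((L.map (fun t : ℤ => (t : ZMod n))).toFinset.image (fun x => (x - 1).val)) =
      (L.map (fun t : ℤ => (t - 1).toNat)).toFinset := by
    ext z
    simp only [Finset.mem_image, List.mem_toFinset, List.mem_map, exists_exists_and_eq_and]
    refine exists_congr fun t => and_congr_right fun ht => ?_
    have h1 := hw t ht
    have : ((t : ZMod n) - 1) = (((t - 1).toNat : ℕ) : ZMod n) := by
      rw [← Int.cast_natCast, Int.toNat_of_nonneg (by omega)]; push_cast; ring
    rw [this, ZMod.val_natCast, Nat.mod_eq_of_lt (by omega)]
  have hs2 : (L.map (fun t : ℤ => (t - 1).toNat)).Pairwise (· < ·) := by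
    rw [List.pairwise_map]
    refine List.Pairwise.imp_of_mem ?_ hs
    intro a b ha hb hab
    have := hw a ha; have := hw b hb
    omega
  have hcard : ((L.map (fun t : ℤ => (t : ZMod n))).toFinset.image (fun x => (x - 1).val)).card
      = r := by
    rw [key, List.toFinset_card_of_nodup (hs2.imp fun h => h.ne)]
    simpa using hl
  unfold plucker
  rw [dif_pos hcard]
  have huniq := Finset.orderEmbOfFin_unique hcard (f := fun i : Fin r => (L[i]'(by omega) - 1).toNat)
    (by
      intro i
      rw [key, List.mem_toFinset, List.mem_map]
      exact ⟨_, List.getElem_mem _, rfl⟩)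
    (by
      intro i j hij
      have h1 := hw _ (List.getElem_mem (l := L) (n := i) (by omega))
      have h2 := hw _ (List.getElem_mem (l := L) (n := j) (by omega))
      have h3 := List.pairwise_iff_getElem.1 hs i j (by omega) (by omega) hij
      simp only [Fin.getElem_fin]
      omega)
  unfold Dv D
  rw [← Matrix.det_transpose]
  congr 1
  ext i j
  have h1 := hw _ (List.getElem_mem (l := L) (n := i) (by omega))
  have h2 := congrFun huniq i
  simp only [Matrix.transpose_apply, Matrix.submatrix_apply, id, Matrix.of_apply,
    Finset.coe_orderIsoOfFin_apply]
  rw [← h2, List.getD_eq_getElem _ _ (by simp; omega), List.getElem_map]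
  simp only [vv, Fin.getElem_fin]
  have e1 : (L[(i : ℕ)]'(by omega) - 1) / (n : ℤ) = 0 := Int.ediv_eq_zero_of_lt (by omega) (by omega)
  rw [e1, zpow_zero, one_mul]
  congr 1
  rw [← Int.cast_natCast, Int.toNat_of_nonneg (by omega)]; push_cast; ring

lemma plucker_eq {n r : ℕ} (hn : 0 < n) (A : Matrix (Fin r) (ZMod n) ℂ) (N : ℤ) : ∀ (L : List ℤ)
    (_ : L.Pairwise (· < ·)) (_ : ∀ t ∈ L, N < t ∧ t ≤ N + n) (_ : L.length = r),
    plucker n r A (L.map (fun t : ℤ => (t : ZMod n))).toFinset = Dv n r A L := by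
  induction N using Int.induction_on with
  | zero =>
    intro L hs hw hl
    exact plucker_base hn A L hs (by simpa using hw) hl
  | succ i ih =>
    intro L hs hw hl
    rcases List.eq_nil_or_concat L with rfl | ⟨L', z, rfl⟩
    · exact ih [] (by simp) (by simp) hl
    · simp only [List.concat_eq_append] at *
      rw [List.pairwise_append] at hs
      obtain ⟨hs1, -, hs2⟩ := hs
      have hs2 : ∀ a ∈ L', a < z := fun a ha => hs2 a ha z (by simp)
      have hz := hw z (by simp)
      have hw' : ∀ t ∈ L', (i : ℤ) + 1 < t := fun t ht => (hw t (by simp [ht])).1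
      by_cases h : z = i + 1 + n
      · have := ih ((i + 1) :: L') (by
          rw [List.pairwise_cons]; exact ⟨hw', hs1⟩) (by
          intro t ht
          rcases List.mem_cons.1 ht with rfl | ht
          · omega
          · have := hs2 t ht; have := hw' t ht; omega) (by simpa using hl)
        rw [h, Dv_rot hn A _ _ (by simpa using hl), ← this]
        congr 1
        ext x
        simp [eq_comm]
      · apply ih _ _ _ hl
        · rw [List.pairwise_append]
          exact ⟨hs1, by simp, by simpa using hs2⟩
        · intro t ht
          have := hw t ht
          rcases List.mem_append.1 ht with ht | ht
          · have := hs2 t ht; omega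
          · have : t = z := by simpa using ht
            omega
  | pred i ih =>
    intro L hs hw hl
    rcases L with _ | ⟨z, L'⟩
    · exact ih [] (by simp) (by simp) hl
    · rw [List.pairwise_cons] at hs
      have hz := hw z (by simp)
      have hw' : ∀ t ∈ L', t ≤ -(i : ℤ) - 1 + n := fun t ht => (hw t (by simp [ht])).2
      by_cases h : z = -(i : ℤ)
      · have := ih (L' ++ [z + n]) (by
          rw [List.pairwise_append]
          refine ⟨hs.2, by simp, ?_⟩
          intro a ha b hb
          have : b = z + n := by simpa using hb
          have := hw' a ha
          omega) (by
          intro t ht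
          rcases List.mem_append.1 ht with ht | ht
          · have := hs.1 t ht; have := hw' t ht; omega
          · have : t = z + n := by simpa using ht
            omega) (by simpa using hl)
        rw [← Dv_rot hn A _ _ (by simpa using hl), ← this]
        congr 1
        ext x
        simp [eq_comm]
      · apply ih _ _ _ hl
        · rw [List.pairwise_cons]; exact hs
        · intro t ht
          have := hw t ht
          rcases List.mem_cons.1 ht with rfl | ht
          · omega
          · have := hs.1 t ht; omega

/-- the integer interval `s+1, ..., s+l` -/
def II (s : ℤ) (l : ℕ) : List ℤ := (List.range l).map (fun t : ℕ => s + 1 + (t : ℤ))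

lemma mem_II {s : ℤ} {l : ℕ} {x : ℤ} : x ∈ II s l ↔ s < x ∧ x ≤ s + l := by
  simp only [II, List.mem_map, List.mem_range]
  constructor
  · rintro ⟨t, ht, rfl⟩; omega
  · rintro ⟨h1, h2⟩; exact ⟨(x - s - 1).toNat, by omega, by omega⟩

@[simp] lemma II_length (s : ℤ) (l : ℕ) : (II s l).length = l := by simp [II]

@[simp] lemma II_zero (s : ℤ) : II s 0 = [] := by simp [II]

lemma II_pairwise (s : ℤ) (l : ℕ) : (II s l).Pairwise (· < ·) := by
  rw [II, List.pairwise_map]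
  refine List.Pairwise.imp ?_ List.pairwise_lt_range
  intro a b h; omega

lemma II_cons (s : ℤ) (l : ℕ) : II s (l + 1) = (s + 1) :: II (s + 1) l := by
  simp only [II, List.range_succ_eq_map, List.map_cons, List.map_map]
  congr 1
  · simp
  · apply List.map_congr_left
    intro t _; simp; ring

lemma II_snoc (s : ℤ) (l : ℕ) : II s (l + 1) = II s l ++ [s + l + 1] := by
  simp only [II, List.range_succ, List.map_append, List.map_cons, List.map_nil]
  congr 2
  ring

lemma II_append (s : ℤ) (a : ℕ) : ∀ b : ℕ, II s a ++ II (s + a) b = II s (a + b)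
  | 0 => by simp
  | b + 1 => by
    rw [II_snoc, ← List.append_assoc, II_append s a b, ← add_assoc, II_snoc]
    congr 2
    push_cast; ring

lemma II_map (s : ℤ) (l : ℕ) (c : ℤ) : (II s l).map (fun t => t + c) = II (s + c) l := by
  simp only [II, List.map_map]
  apply List.map_congr_left
  intro t _; simp; ring

lemma cast_inj {n : ℕ} {a b : ℤ} (h : (a : ZMod n) = (b : ZMod n)) (h1 : a - b < n)
    (h2 : b - a < n) : a = b := by
  rw [ZMod.intCast_eq_intCast_iff_dvd_sub] at h
  by_contra hne
  rcases lt_or_gt_of_ne hne with h3 | h3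
  · have := Int.le_of_dvd (by omega) h; omega
  · have := Int.le_of_dvd (by omega) ((dvd_neg).2 h); omega

lemma y_eq {n k : ℕ} (hk : k ≤ n) (hn : 0 < n) (m : ℤ) (A : Matrix (Fin (n - k)) (ZMod n) ℂ)
    {a b l : ℕ} {s M : ℤ} (hb : b ≤ k) (hl : a + l = n - k)
    (hs : s = m - (((a + b + 1) / 2 : ℕ) : ℤ)) (hM : M = s + a + b) :
    ychRot k n m A a b = Dv n (n - k) A (II s a ++ II M l) := by
  unfold ychRot
  rw [← plucker_eq hn A s]
  · congr 1
    have hsc : (s : ZMod n) = (m : ZMod n) - (((a + b + 1) / 2 : ℕ) : ZMod n) := by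
      rw [hs, Int.cast_sub, Int.cast_natCast]
    ext x
    simp only [JchRot, Jch, seg, Finset.mem_image, Finset.mem_union, Finset.mem_sdiff,
      Finset.mem_Icc, List.mem_toFinset, List.mem_map, List.mem_append, mem_II]
    constructor
    · rintro ⟨_, ⟨_, (⟨t, ht, rfl⟩ | ⟨⟨t, ht, rfl⟩, h2⟩), rfl⟩, rfl⟩
      · exact ⟨s + t, by omega, by push_cast; rw [hsc]; ring⟩
      · have : ¬ t ≤ a + b := fun h => h2 ⟨t, ⟨ht.1, h⟩, rfl⟩
        exact ⟨s + t, by omega, by push_cast; rw [hsc]; ring⟩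
    · rintro ⟨z, hz, rfl⟩
      have hc : ∀ t : ℤ, 0 ≤ t → z = s + t → (t.toNat : ZMod n) -
          (((a + b + 1) / 2 : ℕ) : ZMod n) + (m : ZMod n) = z := by
        intro t ht h
        rw [h, ← Int.cast_natCast t.toNat, Int.toNat_of_nonneg ht]
        push_cast; rw [hsc]; ring
      refine ⟨_, ⟨((z - s).toNat : ZMod n), ?_, rfl⟩, hc _ (by omega) (by ring)⟩
      rcases hz with hz | hz
      · left; exact ⟨_, by omega, rfl⟩
      · right
        refine ⟨⟨_, by omega, rfl⟩, ?_⟩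
        rintro ⟨t, ht, h⟩
        have := cast_inj (n := n) (a := t) (b := ((z - s).toNat : ℤ)) (by exact_mod_cast h)
          (by omega) (by omega)
        omega
  · rw [List.pairwise_append]
    refine ⟨II_pairwise _ _, II_pairwise _ _, ?_⟩
    intro x hx z hz
    rw [mem_II] at hx hz
    omega
  · intro t ht
    rw [List.mem_append, mem_II, mem_II] at ht
    omega
  · simp [hl]

lemma Jcyc_eq {n k : ℕ} (hk : k ≤ n) (hn : 0 < n) (A : Matrix (Fin (n - k)) (ZMod n) ℂ)
    (x : ℤ) : plucker n (n - k) A (Jcyc n k (x : ZMod n)) = Dv n (n - k) A (II x (n - k)) := by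
  rw [← plucker_eq hn A x]
  · congr 1
    ext z
    simp only [Jcyc, Finset.mem_image, Finset.mem_Icc, List.mem_toFinset, List.mem_map, mem_II]
    constructor
    · rintro ⟨t, ht, rfl⟩
      exact ⟨x + t, by omega, by push_cast; rfl⟩
    · rintro ⟨t, ht, rfl⟩
      refine ⟨(t - x).toNat, by omega, ?_⟩
      rw [← Int.cast_natCast, Int.toNat_of_nonneg (by omega)]; push_cast; ring
  · exact II_pairwise _ _
  · intro t ht
    rw [mem_II] at ht
    omega
  · simp

lemma Jplus_eq {n k l : ℕ} (hk : k ≤ n) (hk0 : 0 < k) (hn : 0 < n)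
    (A : Matrix (Fin (n - k)) (ZMod n) ℂ)
    (x : ℤ) (hl : l + 1 = n - k) : plucker n (n - k) A (Jplus n k (x : ZMod n)) =
      Dv n (n - k) A (II x l ++ [x + l + 2]) := by
  rw [← plucker_eq hn A x]
  · congr 1
    ext z
    simp only [Jplus, Jcyc, Finset.mem_insert, Finset.mem_erase, Finset.mem_image, Finset.mem_Icc,
      List.mem_toFinset, List.mem_map, mem_II, List.mem_append, List.mem_singleton]
    constructor
    · rintro (rfl | ⟨h1, t, ht, rfl⟩)
      · refine ⟨x + l + 2, by omega, ?_⟩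
        rw [← hl]; push_cast; ring
      · have : t ≠ n - k := by rintro rfl; exact h1 rfl
        exact ⟨x + t, by omega, by push_cast; rfl⟩
    · rintro ⟨t, (ht | ht), rfl⟩
      · right
        refine ⟨?_, (t - x).toNat, by omega, ?_⟩
        · intro h
          have := cast_inj (n := n) (a := t) (b := x + ((n - k : ℕ) : ℤ))
            (by rw [h]; push_cast; ring) (by omega) (by omega)
          omega
        · rw [← Int.cast_natCast, Int.toNat_of_nonneg (by omega)]; push_cast; ring
      · left
        rw [ht, ← hl]; push_cast; ring
  · rw [List.pairwise_append]
    refine ⟨II_pairwise _ _, by simp, ?_⟩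
    intro a ha b hb
    rw [mem_II] at ha
    have : b = x + l + 2 := by simpa using hb
    omega
  · intro t ht
    rw [List.mem_append, mem_II, List.mem_singleton] at ht
    omega
  · simp [hl]

lemma tele (k n : ℕ) (y R : ℕ → ℕ → ℂ) (d : ℤ) (hd1 : 1 - (k : ℤ) ≤ d) (hd2 : d ≤ (n : ℤ) - k - 2)
    (hk0 : 0 < k) (hkn : k < n)
    (hA : ∀ a b : ℕ, a < n - k → 1 ≤ b → b ≤ k - 1 → (a : ℤ) - b = d →
      (y a (b + 1) * y (a + 1) (b - 1)) / (y a b * y (a + 1) b) = R (a + 1) b - R a b)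
    (hB : ∀ a b : ℕ, 1 ≤ a → a ≤ n - k - 1 → 1 ≤ b → b ≤ k → (a : ℤ) - b = d →
      (y (a - 1) b * y (a + 1) (b - 1)) / (y a (b - 1) * y a b) = R a b - R a (b - 1))
    (N : ℕ → ℂ) (hN : ∀ p : ℕ, N p = R ((p + 1) / 2 + d).toNat (p / 2)) :
    sumA k n y d + sumB k n y d =
      N (min (2 * k) (2 * ((n : ℤ) - k - d) - 1).toNat) - N (max 1 (-2 * d).toNat) := by
  set p0 := max 1 (-2 * d).toNat with hp0
  set p1 := min (2 * k) (2 * ((n : ℤ) - k - d) - 1).toNat with hp1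
  have hle : p0 ≤ p1 := by omega
  rw [← Finset.sum_Ico_sub N hle, ← Finset.sum_filter_add_sum_filter_not _ (fun p => Even p)]
  congr 1
  · unfold sumA
    refine Finset.sum_nbij' (fun p => 2 * p.2) (fun p => (((p / 2 : ℕ) + d).toNat, p / 2))
      ?_ ?_ ?_ ?_ ?_
    · rintro ⟨a, b⟩ h
      simp only [Finset.mem_filter, Finset.mem_product, Finset.mem_range, Finset.mem_Icc,
        Finset.mem_Ico] at h ⊢
      exact ⟨by omega, even_two_mul _⟩
    · intro p h
      simp only [Finset.mem_filter, Finset.mem_product, Finset.mem_range, Finset.mem_Icc,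
        Finset.mem_Ico, Nat.even_iff] at h ⊢
      omega
    · rintro ⟨a, b⟩ h
      simp only [Finset.mem_filter, Finset.mem_product, Finset.mem_range, Finset.mem_Icc,
        Prod.mk.injEq] at h ⊢
      omega
    · intro p h
      simp only [Finset.mem_filter, Finset.mem_Ico, Nat.even_iff] at h ⊢
      omega
    · rintro ⟨a, b⟩ h
      simp only [Finset.mem_filter, Finset.mem_product, Finset.mem_range, Finset.mem_Icc] at h ⊢
      rw [hA a b (by omega) (by omega) (by omega) h.2, hN, hN]
      congr 2 <;> omega
  · unfold sumB
    refine Finset.sum_nbij' (fun p => 2 * p.2 - 1)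
      (fun p => ((((p + 1) / 2 : ℕ) + d).toNat, (p + 1) / 2)) ?_ ?_ ?_ ?_ ?_
    · rintro ⟨a, b⟩ h
      simp only [Finset.mem_filter, Finset.mem_product, Finset.mem_Icc,
        Finset.mem_Ico, Nat.even_iff] at h ⊢
      omega
    · intro p h
      simp only [Finset.mem_filter, Finset.mem_product, Finset.mem_Icc,
        Finset.mem_Ico, Nat.even_iff] at h ⊢
      omega
    · rintro ⟨a, b⟩ h
      simp only [Finset.mem_filter, Finset.mem_product, Finset.mem_Icc,
        Prod.mk.injEq] at h ⊢
      omega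
    · intro p h
      simp only [Finset.mem_filter, Finset.mem_Ico, Nat.even_iff] at h ⊢
      omega
    · rintro ⟨a, b⟩ h
      simp only [Finset.mem_filter, Finset.mem_product, Finset.mem_Icc] at h ⊢
      rw [hB a b (by omega) (by omega) (by omega) (by omega) h.2, hN, hN]
      congr 2 <;> omega

lemma II_snoc' {s z : ℤ} {l : ℕ} (h : z = s + l + 1) : II s (l + 1) = II s l ++ [z] := by
  rw [h, II_snoc]

lemma II_cons' {s z : ℤ} {l : ℕ} (h : z = s + 1) : II s (l + 1) = z :: II z l := by
  rw [h, II_cons]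

lemma II_app' {s z : ℤ} {a b c : ℕ} (h : z = s + a) (h2 : c = a + b) :
    II s a ++ II z b = II s c := by
  rw [h, h2, II_append]

section
variable {n k : ℕ}

noncomputable def We (n k : ℕ) (m : ℤ) (A : Matrix (Fin (n - k)) (ZMod n) ℂ) (a b : ℕ) : ℂ :=
  Dv n (n - k) A (II (m - (((a + b + 1) / 2 : ℕ) : ℤ)) (a - 1) ++
    (m - (((a + b + 1) / 2 : ℕ) : ℤ) + a + 1) ::
      II (m - (((a + b + 1) / 2 : ℕ) : ℤ) + a + b) (n - k - a))

lemma We_eq (m : ℤ) (A : Matrix (Fin (n - k)) (ZMod n) ℂ) {a b l : ℕ} {s M z : ℤ}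
    (hl : a + 1 + l = n - k) (hs : s = m - (((a + 1 + b + 1) / 2 : ℕ) : ℤ)) (hz : z = s + a + 2)
    (hM : M = s + a + 1 + b) :
    We n k m A (a + 1) b = Dv n (n - k) A (II s a ++ z :: II M l) := by
  unfold We
  have e1 : a + 1 - 1 = a := by omega
  have e2 : n - k - (a + 1) = l := by omega
  have e3 : s + ((a + 1 : ℕ) : ℤ) + 1 = z := by omega
  have e4 : s + ((a + 1 : ℕ) : ℤ) + b = M := by omega
  rw [← hs, e1, e2, e3, e4]

noncomputable def Wo (n k : ℕ) (m : ℤ) (A : Matrix (Fin (n - k)) (ZMod n) ℂ) (a b : ℕ) : ℂ :=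
  Dv n (n - k) A (II (m - (((a + b + 1) / 2 : ℕ) : ℤ)) a ++
    (II (m - (((a + b + 1) / 2 : ℕ) : ℤ) + a + b) (n - k - a - 1) ++
      [m - (((a + b + 1) / 2 : ℕ) : ℤ) + a + b + (n - k - a - 1 : ℕ) + 2]))

lemma Wo_eq (m : ℤ) (A : Matrix (Fin (n - k)) (ZMod n) ℂ) {a b l : ℕ} {s M z : ℤ}
    (hl : a + l + 1 = n - k) (hs : s = m - (((a + b + 1) / 2 : ℕ) : ℤ))
    (hM : M = s + a + b) (hz : z = M + l + 2) :
    Wo n k m A a b = Dv n (n - k) A (II s a ++ (II M l ++ [z])) := by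
  unfold Wo
  have e2 : n - k - a - 1 = l := by omega
  rw [← hs, ← hM, e2, ← hz]

noncomputable def Re (n k : ℕ) (m : ℤ) (A : Matrix (Fin (n - k)) (ZMod n) ℂ) (a b : ℕ) : ℂ :=
  if a = 0 then 0 else We n k m A a b / ychRot k n m A a b

noncomputable def Ro (n k : ℕ) (m : ℤ) (A : Matrix (Fin (n - k)) (ZMod n) ℂ) (a b : ℕ) : ℂ :=
  if a = n - k then 0 else -(Wo n k m A a b / ychRot k n m A a b)

variable (hk : k ≤ n) (hn : 0 < n) (m : ℤ) (A : Matrix (Fin (n - k)) (ZMod n) ℂ)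
  (hy : ∀ i ≤ n - k, ∀ j ≤ k, ychRot k n m A i j ≠ 0)
include hk hn hy

lemma evenA {a b l c : ℕ} (h1 : a + 1 + (b + 1) = 2 * c) (h2 : a + 1 + l + 1 = n - k)
    (h3 : b + 2 ≤ k) :
    (ychRot k n m A (a + 1) (b + 2) * ychRot k n m A (a + 2) b) /
      (ychRot k n m A (a + 1) (b + 1) * ychRot k n m A (a + 2) (b + 1)) =
      Re n k m A (a + 2) (b + 1) - Re n k m A (a + 1) (b + 1) := by
  have n1 := hy (a + 1) (by omega) (b + 1) (by omega)
  have n2 := hy (a + 2) (by omega) (b + 1) (by omega)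
  rw [Re, Re, if_neg (by omega), if_neg (by omega)]
  have e1 : ychRot k n m A (a + 1) (b + 1) = Dv n (n - k) A
      (II (m - c) a ++ (m - c + a + 1) :: (II (m + c) l ++ [m + c + l + 1])) := by
    rw [y_eq hk hn m A (s := m - c) (M := m + c) (l := l + 1) (by omega) (by omega) (by omega)
      (by omega), II_snoc, II_snoc]
    simp
  have e2 : ychRot k n m A (a + 2) (b + 1) = Dv n (n - k) A
      ((m - c) :: (II (m - c) a ++ (m - c + a + 1) :: II (m + c) l)) := by
    rw [y_eq hk hn m A (s := m - c - 1) (M := m + c) (l := l) (by omega) (by omega) (by omega)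
      (by omega), II_cons' (z := m - c) (by ring), II_snoc]
    simp
  have e3 : ychRot k n m A (a + 1) (b + 2) = Dv n (n - k) A
      ((m - c) :: (II (m - c) a ++ (II (m + c) l ++ [m + c + l + 1]))) := by
    rw [y_eq hk hn m A (s := m - c - 1) (M := m + c) (l := l + 1) (by omega) (by omega) (by omega)
      (by omega), II_cons' (z := m - c) (by ring), II_snoc]
    simp
  have e4 : ychRot k n m A (a + 2) b = Dv n (n - k) A
      (II (m - c) a ++ (m - c + a + 1) :: (m - c + a + 2) :: II (m + c) l) := by
    rw [y_eq hk hn m A (s := m - c) (M := m + c) (l := l) (by omega) (by omega) (by omega)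
      (by omega), II_snoc' (z := m - c + a + 2) (by push_cast; ring), II_snoc]
    simp
  have e5 : We n k m A (a + 1) (b + 1) = Dv n (n - k) A
      (II (m - c) a ++ (m - c + a + 2) :: (II (m + c) l ++ [m + c + l + 1])) := by
    rw [We_eq m A (s := m - c) (M := m + c) (z := m - c + a + 2) (l := l + 1) (by omega) (by omega)
      (by omega) (by omega), II_snoc]
  have e6 : We n k m A (a + 2) (b + 1) = Dv n (n - k) A
      ((m - c) :: (II (m - c) a ++ (m - c + a + 2) :: II (m + c) l)) := by
    rw [We_eq m A (s := m - c - 1) (M := m + c) (z := m - c + a + 2) (l := l) (by omega) (by omega)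
      (by omega) (by omega), II_cons' (z := m - c) (by ring)]
    simp
  have P := PL1 ((II (m - c) a).map (vv n (n - k) A)) ((II (m + c) l).map (vv n (n - k) A))
    (vv n (n - k) A (m - c)) (vv n (n - k) A (m - c + a + 1)) (vv n (n - k) A (m - c + a + 2))
    (vv n (n - k) A (m + c + l + 1)) (by simp; omega)
  simp only [Dv, List.map_append, List.map_cons, List.map_nil] at e1 e2 e3 e4 e5 e6
  rw [← e1, ← e2, ← e3, ← e4, ← e5, ← e6] at P
  field_simp
  linear_combination -P

lemma evenA0 {b c : ℕ} (h1 : b + 1 = 2 * c) (h2 : b + 2 ≤ k) (h3 : 1 ≤ n - k) :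
    (ychRot k n m A 0 (b + 2) * ychRot k n m A 1 b) /
      (ychRot k n m A 0 (b + 1) * ychRot k n m A 1 (b + 1)) =
      Re n k m A 1 (b + 1) - Re n k m A 0 (b + 1) := by
  have n1 := hy 0 (by omega) (b + 1) (by omega)
  have n2 := hy 1 (by omega) (b + 1) (by omega)
  rw [Re, Re, if_neg (by omega), if_pos rfl, sub_zero]
  have e1 : ychRot k n m A 0 (b + 2) = ychRot k n m A 0 (b + 1) := by
    rw [y_eq hk hn m A (s := m - c - 1) (M := m + c) (l := n - k) (by omega) (by omega) (by omega)
      (by omega), y_eq hk hn m A (s := m - c) (M := m + c) (l := n - k) (by omega) (by omega)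
      (by omega) (by omega)]
    simp
  obtain ⟨l, hl⟩ : ∃ l, 1 + l = n - k := ⟨n - k - 1, by omega⟩
  have e2 : ychRot k n m A 1 b = We n k m A (0 + 1) (b + 1) := by
    rw [y_eq hk hn m A (s := m - c) (M := m + c) (l := l) (by omega) (by omega) (by omega)
      (by omega), We_eq m A (s := m - c - 1) (M := m + c) (z := m - c + 1) (l := l) (by omega)
      (by omega) (by omega) (by omega), II_cons]
    simp
  rw [e1, e2]
  field_simp

lemma evenB {a b l c : ℕ} (h1 : a + 1 + (b + 1) = 2 * c) (h2 : a + 1 + l + 1 = n - k)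
    (h3 : b + 1 ≤ k) :
    (ychRot k n m A a (b + 1) * ychRot k n m A (a + 2) b) /
      (ychRot k n m A (a + 1) b * ychRot k n m A (a + 1) (b + 1)) =
      Re n k m A (a + 1) (b + 1) - Re n k m A (a + 1) b := by
  have n1 := hy (a + 1) (by omega) (b + 1) (by omega)
  have n2 := hy (a + 1) (by omega) b (by omega)
  rw [Re, Re, if_neg (by omega), if_neg (by omega)]
  have e1 : ychRot k n m A (a + 1) (b + 1) = Dv n (n - k) A
      (II (m - c) a ++ (m - c + a + 1) :: (II (m + c) l ++ [m + c + l + 1])) := by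
    rw [y_eq hk hn m A (s := m - c) (M := m + c) (l := l + 1) (by omega) (by omega) (by omega)
      (by omega), II_snoc, II_snoc]
    simp
  have e2 : ychRot k n m A (a + 1) b = Dv n (n - k) A
      (II (m - c) a ++ (m - c + a + 1) :: (m + c) :: II (m + c) l) := by
    rw [y_eq hk hn m A (s := m - c) (M := m + c - 1) (l := l + 1) (by omega) (by omega) (by omega)
      (by omega), II_snoc, II_cons' (z := m + c) (by ring)]
    simp
  have e3 : ychRot k n m A a (b + 1) = Dv n (n - k) A
      (II (m - c) a ++ (m + c) :: (II (m + c) l ++ [m + c + l + 1])) := by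
    rw [y_eq hk hn m A (s := m - c) (M := m + c - 1) (l := l + 2) (by omega) (by omega) (by omega)
      (by omega), II_cons' (z := m + c) (by ring), II_snoc]
  have e4 : ychRot k n m A (a + 2) b = Dv n (n - k) A
      (II (m - c) a ++ (m - c + a + 1) :: (m - c + a + 2) :: II (m + c) l) := by
    rw [y_eq hk hn m A (s := m - c) (M := m + c) (l := l) (by omega) (by omega) (by omega)
      (by omega), II_snoc' (z := m - c + a + 2) (by push_cast; ring), II_snoc]
    simp
  have e5 : We n k m A (a + 1) (b + 1) = Dv n (n - k) A
      (II (m - c) a ++ (m - c + a + 2) :: (II (m + c) l ++ [m + c + l + 1])) := by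
    rw [We_eq m A (s := m - c) (M := m + c) (z := m - c + a + 2) (l := l + 1) (by omega) (by omega)
      (by omega) (by omega), II_snoc]
  have e6 : We n k m A (a + 1) b = Dv n (n - k) A
      (II (m - c) a ++ (m - c + a + 2) :: (m + c) :: II (m + c) l) := by
    rw [We_eq m A (s := m - c) (M := m + c - 1) (z := m - c + a + 2) (l := l + 1) (by omega)
      (by omega) (by omega) (by omega), II_cons' (z := m + c) (by ring)]
  have P := PL2 ((II (m - c) a).map (vv n (n - k) A)) ((II (m + c) l).map (vv n (n - k) A))
    (vv n (n - k) A (m - c + a + 1)) (vv n (n - k) A (m - c + a + 2)) (vv n (n - k) A (m + c))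
    (vv n (n - k) A (m + c + l + 1)) (by simp; omega)
  simp only [Dv, List.map_append, List.map_cons, List.map_nil] at e1 e2 e3 e4 e5 e6
  rw [← e1, ← e2, ← e3, ← e4, ← e5, ← e6] at P
  field_simp
  linear_combination -P

lemma oddA {a b l c : ℕ} (h1 : a + (b + 1) + 1 = 2 * c) (h2 : a + l + 2 = n - k)
    (h3 : b + 2 ≤ k) :
    (ychRot k n m A a (b + 2) * ychRot k n m A (a + 1) b) /
      (ychRot k n m A a (b + 1) * ychRot k n m A (a + 1) (b + 1)) =
      Ro n k m A (a + 1) (b + 1) - Ro n k m A a (b + 1) := by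
  have n1 := hy a (by omega) (b + 1) (by omega)
  have n2 := hy (a + 1) (by omega) (b + 1) (by omega)
  rw [Ro, Ro, if_neg (by omega), if_neg (by omega)]
  have e1 : ychRot k n m A a (b + 1) = Dv n (n - k) A
      (II (m - c) a ++ (m + c) :: (II (m + c) l ++ [m + c + l + 1])) := by
    rw [y_eq hk hn m A (s := m - c) (M := m + c - 1) (l := l + 2) (by omega) (by omega) (by omega)
      (by omega), II_cons' (z := m + c) (by ring), II_snoc]
  have e2 : ychRot k n m A (a + 1) (b + 1) = Dv n (n - k) A
      (II (m - c) a ++ (m - c + a + 1) :: (II (m + c) l ++ [m + c + l + 1])) := by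
    rw [y_eq hk hn m A (s := m - c) (M := m + c) (l := l + 1) (by omega) (by omega) (by omega)
      (by omega), II_snoc, II_snoc]
    simp
  have e3 : ychRot k n m A a (b + 2) = Dv n (n - k) A
      (II (m - c) a ++ (II (m + c) l ++ [m + c + l + 1, m + c + l + 2])) := by
    rw [y_eq hk hn m A (s := m - c) (M := m + c) (l := l + 2) (by omega) (by omega) (by omega)
      (by omega), II_snoc' (z := m + c + l + 2) (by push_cast; ring), II_snoc]
    simp
  have e4 : ychRot k n m A (a + 1) b = Dv n (n - k) A
      (II (m - c) a ++ (m - c + a + 1) :: (m + c) :: II (m + c) l) := by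
    rw [y_eq hk hn m A (s := m - c) (M := m + c - 1) (l := l + 1) (by omega) (by omega) (by omega)
      (by omega), II_snoc, II_cons' (z := m + c) (by ring)]
    simp
  have e5 : Wo n k m A a (b + 1) = Dv n (n - k) A
      (II (m - c) a ++ (m + c) :: (II (m + c) l ++ [m + c + l + 2])) := by
    rw [Wo_eq m A (s := m - c) (M := m + c - 1) (z := m + c + l + 2) (l := l + 1) (by omega)
      (by omega) (by omega) (by omega), II_cons' (z := m + c) (by ring)]
    simp
  have e6 : Wo n k m A (a + 1) (b + 1) = Dv n (n - k) A
      (II (m - c) a ++ (m - c + a + 1) :: (II (m + c) l ++ [m + c + l + 2])) := by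
    rw [Wo_eq m A (s := m - c) (M := m + c) (z := m + c + l + 2) (l := l) (by omega)
      (by omega) (by omega) (by omega), II_snoc]
    simp
  have P := PL3 ((II (m - c) a).map (vv n (n - k) A)) ((II (m + c) l).map (vv n (n - k) A))
    (vv n (n - k) A (m - c + a + 1)) (vv n (n - k) A (m + c))
    (vv n (n - k) A (m + c + l + 1)) (vv n (n - k) A (m + c + l + 2)) (by simp; omega)
  simp only [Dv, List.map_append, List.map_cons, List.map_nil] at e1 e2 e3 e4 e5 e6
  rw [← e1, ← e2, ← e3, ← e4, ← e5, ← e6] at P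
  field_simp
  linear_combination -P

lemma oddA1 {a b c : ℕ} (h1 : a + (b + 1) + 1 = 2 * c) (h2 : a + 1 = n - k)
    (h3 : b + 2 ≤ k) :
    (ychRot k n m A a (b + 2) * ychRot k n m A (a + 1) b) /
      (ychRot k n m A a (b + 1) * ychRot k n m A (a + 1) (b + 1)) =
      Ro n k m A (a + 1) (b + 1) - Ro n k m A a (b + 1) := by
  have n1 := hy a (by omega) (b + 1) (by omega)
  have n2 := hy (a + 1) (by omega) (b + 1) (by omega)
  rw [Ro, Ro, if_pos (by omega), if_neg (by omega)]
  have e1 : ychRot k n m A (a + 1) b = ychRot k n m A (a + 1) (b + 1) := by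
    rw [y_eq hk hn m A (s := m - c) (M := m + c - 1) (l := 0) (by omega) (by omega) (by omega)
      (by omega), y_eq hk hn m A (s := m - c) (M := m + c) (l := 0) (by omega) (by omega)
      (by omega) (by omega)]
    simp
  have e2 : ychRot k n m A a (b + 2) = Wo n k m A a (b + 1) := by
    rw [y_eq hk hn m A (s := m - c) (M := m + c) (l := 1) (by omega) (by omega) (by omega)
      (by omega), Wo_eq m A (s := m - c) (M := m + c - 1) (z := m + c + 1) (l := 0) (by omega)
      (by omega) (by omega) (by omega), II_cons]
    simp
  rw [e1, e2]
  field_simp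
  ring

lemma oddB {a b l c : ℕ} (h1 : a + 1 + (b + 1) + 1 = 2 * c) (h2 : a + 1 + l + 1 = n - k)
    (h3 : b + 1 ≤ k) :
    (ychRot k n m A a (b + 1) * ychRot k n m A (a + 2) b) /
      (ychRot k n m A (a + 1) b * ychRot k n m A (a + 1) (b + 1)) =
      Ro n k m A (a + 1) (b + 1) - Ro n k m A (a + 1) b := by
  have n1 := hy (a + 1) (by omega) (b + 1) (by omega)
  have n2 := hy (a + 1) (by omega) b (by omega)
  rw [Ro, Ro, if_neg (by omega), if_neg (by omega)]
  have e1 : ychRot k n m A (a + 1) (b + 1) = Dv n (n - k) A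
      ((m - c + 1) :: (II (m - c + 1) a ++ (II (m + c - 1) l ++ [m + c + l]))) := by
    rw [y_eq hk hn m A (s := m - c) (M := m + c - 1) (l := l + 1) (by omega) (by omega) (by omega)
      (by omega), II_cons, II_snoc' (z := m + c + l) (by ring)]
    simp
  have e2 : ychRot k n m A (a + 1) b = Dv n (n - k) A
      (II (m - c + 1) a ++ (m - c + a + 2) :: (II (m + c - 1) l ++ [m + c + l])) := by
    rw [y_eq hk hn m A (s := m - c + 1) (M := m + c - 1) (l := l + 1) (by omega) (by omega)
      (by omega) (by omega), II_snoc' (z := m - c + a + 2) (by ring),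
      II_snoc' (z := m + c + l) (by ring)]
    simp
  have e3 : ychRot k n m A a (b + 1) = Dv n (n - k) A
      (II (m - c + 1) a ++ (II (m + c - 1) l ++ [m + c + l, m + c + l + 1])) := by
    rw [y_eq hk hn m A (s := m - c + 1) (M := m + c - 1) (l := l + 2) (by omega) (by omega)
      (by omega) (by omega), II_snoc' (z := m + c + l + 1) (by push_cast; ring),
      II_snoc' (z := m + c + l) (by ring)]
    simp
  have e4 : ychRot k n m A (a + 2) b = Dv n (n - k) A
      ((m - c + 1) :: (II (m - c + 1) a ++ (m - c + a + 2) :: II (m + c - 1) l)) := by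
    rw [y_eq hk hn m A (s := m - c) (M := m + c - 1) (l := l) (by omega) (by omega) (by omega)
      (by omega), II_cons, II_snoc' (z := m - c + a + 2) (by ring)]
    simp
  have e5 : Wo n k m A (a + 1) (b + 1) = Dv n (n - k) A
      ((m - c + 1) :: (II (m - c + 1) a ++ (II (m + c - 1) l ++ [m + c + l + 1]))) := by
    rw [Wo_eq m A (s := m - c) (M := m + c - 1) (z := m + c + l + 1) (l := l) (by omega)
      (by omega) (by omega) (by omega), II_cons]
    simp
  have e6 : Wo n k m A (a + 1) b = Dv n (n - k) A
      (II (m - c + 1) a ++ (m - c + a + 2) :: (II (m + c - 1) l ++ [m + c + l + 1])) := by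
    rw [Wo_eq m A (s := m - c + 1) (M := m + c - 1) (z := m + c + l + 1) (l := l) (by omega)
      (by omega) (by omega) (by omega), II_snoc' (z := m - c + a + 2) (by ring)]
    simp
  have P := PL4 ((II (m - c + 1) a).map (vv n (n - k) A)) ((II (m + c - 1) l).map (vv n (n - k) A))
    (vv n (n - k) A (m - c + 1)) (vv n (n - k) A (m - c + a + 2))
    (vv n (n - k) A (m + c + l)) (vv n (n - k) A (m + c + l + 1)) (by simp; omega)
  simp only [Dv, List.map_append, List.map_cons, List.map_nil] at e1 e2 e3 e4 e5 e6
  rw [← e1, ← e2, ← e3, ← e4, ← e5, ← e6] at P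
  field_simp
  linear_combination -P


end

/-- the ratio attached to `x` -/
noncomputable def T (n k : ℕ) (A : Matrix (Fin (n - k)) (ZMod n) ℂ) (x : ZMod n) : ℂ :=
  plucker n (n - k) A (Jplus n k x) / plucker n (n - k) A (Jcyc n k x)

section
variable {n k : ℕ} (hk : k < n) (hk0 : 0 < k) (m : ℤ) (A : Matrix (Fin (n - k)) (ZMod n) ℂ)

lemma Re_start (hk : k < n) (a : ℕ) (ha : a + 1 < n - k) : Re n k m A (a + 1) 0 = 0 := by
  obtain ⟨l, hl⟩ : ∃ l, a + 1 + (l + 1) = n - k := ⟨n - k - a - 2, by omega⟩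
  rw [Re, if_neg (by omega), We_eq m A hl rfl rfl rfl, II_cons, Dv,
    D_eq_zero _ a (a + 1) (by omega) (by omega) (by omega) 1, zero_div]
  rw [one_smul]
  simp [II_length]
  congr 1; ring

include hk hk0

lemma Re_end1 (a c : ℕ) (ha : a + 1 < n - k) (hc : a + 1 + k = 2 * c) :
    Re n k m A (a + 1) k = T n k A ((m + c : ℤ) : ZMod n) := by
  obtain ⟨l, hl⟩ : ∃ l, a + 1 + l = n - k := ⟨n - k - a - 1, by omega⟩
  rw [Re, if_neg (by omega), T, Jcyc_eq hk.le (by omega),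
    Jplus_eq hk.le hk0 (by omega) A _ (l := l + a) (by omega),
    We_eq m A (s := m - c) (M := m + c) (z := m - c + a + 2) hl (by omega) (by omega) (by omega),
    y_eq hk.le (by omega) m A (s := m - c) (M := m + c) le_rfl hl (by omega) (by omega),
    Dv_rotAll (by omega) A (II (m - c) (a + 1)) _ (by simp; omega), II_map,
    II_app' (c := n - k) (by omega) (by omega)]
  have := Dv_rotAll (by omega) A (II (m - c) a ++ [m - c + a + 2]) (II (m + c) l) (by simp; omega)
  rw [List.map_append, II_map, ← List.append_assoc, II_app' (c := l + a) (by omega) (by omega),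
    List.append_assoc, List.map_cons, List.map_nil] at this
  rw [List.singleton_append] at this
  rw [this]
  congr 4
  push_cast
  omega

lemma Re_end2 (a b c : ℕ) (ha : a + 1 = n - k) (hb : b ≤ k) (hc : a + 1 + b + 1 = 2 * c) :
    Re n k m A (a + 1) b = T n k A ((m - c : ℤ) : ZMod n) := by
  rw [Re, if_neg (by omega), T, Jcyc_eq hk.le (by omega),
    Jplus_eq hk.le hk0 (by omega) A _ ha,
    We_eq m A (s := m - c) (M := m - c + a + 1 + b) (z := m - c + a + 2) (l := 0) (by omega)
      (by omega) (by omega) (by omega),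
    y_eq hk.le (by omega) m A (s := m - c) (M := m - c + a + 1 + b) (l := 0) hb (by omega)
      (by omega) (by push_cast; ring)]
  simp [ha]

lemma Ro_end1 (a c : ℕ) (ha : a + 1 < n - k) (hc : a + 1 + k + 1 = 2 * c) :
    Ro n k m A (a + 1) k = 0 := by
  obtain ⟨l, hl⟩ : ∃ l, a + 1 + l + 1 = n - k := ⟨n - k - a - 2, by omega⟩
  rw [Ro, if_neg (by omega), Wo_eq m A (s := m - c) (M := m + c - 1) (z := m - c + 1 + n) hl
    (by omega) (by omega) (by omega), II_cons, Dv,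
    D_eq_zero _ (a + 1 + l) 0 (by omega) (by omega) (by omega) ((-1) ^ (n - k - 1)), zero_div,
    neg_zero]
  have e : (List.map (vv n (n - k) A) (((m - c + 1) :: II (m - c + 1) a) ++
      (II (m + c - 1) l ++ [m - c + 1 + n]))) =
      (List.map (vv n (n - k) A) (((m - c + 1) :: II (m - c + 1) a) ++ II (m + c - 1) l)) ++
        [vv n (n - k) A (m - c + 1 + n)] := by simp
  rw [e, List.getD_append_right _ _ _ _ (by simp), vv_per (by omega)]
  have e2 : a + 1 + l - (List.map (vv n (n - k) A) (((m - c + 1) :: II (m - c + 1) a) ++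
      II (m + c - 1) l)).length = 0 := by simp; omega
  rw [e2]
  simp

lemma Ro_start1 (a c : ℕ) (ha : a + 1 < n - k) (hc : a + 1 = 2 * c) :
    Ro n k m A (a + 1) 0 = - T n k A ((m - c : ℤ) : ZMod n) := by
  obtain ⟨l, hl⟩ : ∃ l, a + 1 + l + 1 = n - k := ⟨n - k - a - 2, by omega⟩
  rw [Ro, if_neg (by omega), T, Jcyc_eq hk.le (by omega),
    Jplus_eq hk.le hk0 (by omega) A _ (l := a + 1 + l) (by omega),
    Wo_eq m A (s := m - c) (M := m - c + (a + 1 : ℕ)) (z := m - c + (a + 1 : ℕ) + l + 2) hl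
      (by omega) (by omega) (by omega),
    y_eq hk.le (by omega) m A (s := m - c) (M := m - c + (a + 1 : ℕ)) (l := l + 1) (by omega)
      (by omega) (by omega) (by omega), II_app' (c := n - k) rfl (by omega),
    ← List.append_assoc, II_app' (c := a + 1 + l) rfl rfl]
  congr 5
  push_cast
  ring

lemma Ro_start2 (b c : ℕ) (hb : b ≤ k) (hc : b + 1 = 2 * c) :
    Ro n k m A 0 b = - T n k A ((m - c + b : ℤ) : ZMod n) := by
  obtain ⟨l, hl⟩ : ∃ l, l + 1 = n - k := ⟨n - k - 1, by omega⟩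
  rw [Ro, if_neg (by omega), T, Jcyc_eq hk.le (by omega),
    Jplus_eq hk.le hk0 (by omega) A _ hl,
    Wo_eq m A (s := m - c) (M := m - c + b) (z := m - c + b + l + 2) (l := l) (by omega)
      (by omega) (by omega) (by omega),
    y_eq hk.le (by omega) m A (s := m - c) (M := m - c + b) (l := n - k) (by omega)
      (by omega) (by omega) (by omega)]
  simp

lemma first_term : ychRot k n m A 1 (k - 1) / ychRot k n m A 0 k =
    T n k A ((m - ((k + 1) / 2 : ℕ) + k : ℤ) : ZMod n) := by
  obtain ⟨l, hl⟩ : ∃ l, l + 1 = n - k := ⟨n - k - 1, by omega⟩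
  obtain ⟨c, hc⟩ : ∃ c, c = (k + 1) / 2 := ⟨_, rfl⟩
  rw [← hc, T, Jcyc_eq hk.le (by omega),
    Jplus_eq hk.le hk0 (by omega) A _ hl,
    y_eq hk.le (by omega) m A (s := m - c) (M := m - c + k) (l := l) (by omega)
      (by omega) (by omega) (by omega),
    y_eq hk.le (by omega) m A (s := m - c) (M := m - c + k) (l := n - k) (by omega)
      (by omega) (by omega) (by omega), II_cons, II_zero, II_zero, List.singleton_append,
      ← Dv_rot (by omega) A _ _ (by simp; omega), List.nil_append]
  congr 4
  omega

lemma second_term : ychRot k n m A (n - k - 1) 1 / ychRot k n m A (n - k) 0 =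
    T n k A ((m - ((n - k + 1) / 2 : ℕ) : ℤ) : ZMod n) := by
  obtain ⟨l, hl⟩ : ∃ l, l + 1 = n - k := ⟨n - k - 1, by omega⟩
  obtain ⟨c, hc⟩ : ∃ c, c = (n - k + 1) / 2 := ⟨_, rfl⟩
  rw [← hc, T, Jcyc_eq hk.le (by omega),
    Jplus_eq hk.le hk0 (by omega) A _ hl,
    show n - k - 1 = l by omega,
    y_eq hk.le (by omega) m A (s := m - c) (M := m - c + (n - k : ℕ)) (l := 1) (by omega)
      (by omega) (by omega) (by omega),
    y_eq hk.le (by omega) m A (s := m - c) (M := m - c + (n - k : ℕ)) (l := 0) (by omega)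
      (by omega) (by omega) (by omega), II_cons, II_zero, II_zero, List.append_nil]
  congr 4
  omega

/-- index attached to `d` -/
def phi (k : ℕ) (m d : ℤ) : ℤ := if 2 ∣ d then m + d / 2 + k else m - (d + 1) / 2

variable (hy : ∀ i ≤ n - k, ∀ j ≤ k, ychRot k n m A i j ≠ 0)
include hy

lemma diag (d : ℤ) (hd1 : 1 - (k : ℤ) ≤ d) (hd2 : d ≤ (n : ℤ) - k - 2) :
    sumA k n (ychRot k n m A) d + sumB k n (ychRot k n m A) d =
      T n k A ((phi k m d : ℤ) : ZMod n) := by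
  by_cases hd : 2 ∣ d
  · obtain ⟨h, rfl⟩ := hd
    rw [phi, if_pos (dvd_mul_right _ _),
      tele k n _ (Re n k m A) (2 * h) hd1 hd2 hk0 hk ?_ ?_ _ (fun p => rfl)]
    · have e0 : Re n k m A ((((max 1 (-2 * (2 * h)).toNat : ℕ) : ℤ) + 1) / 2 + 2 * h).toNat
          (max 1 (-2 * (2 * h)).toNat / 2) = 0 := by
        rcases le_or_gt 0 h with h0 | h0
        · obtain ⟨a, ha⟩ : ∃ a : ℕ, (a : ℤ) = 2 * h := ⟨(2 * h).toNat, by omega⟩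
          rw [← Re_start m A hk a (by omega)]
          congr 1 <;> omega
        · rw [Re, if_pos (by omega)]
      rw [e0, sub_zero]
      rcases le_or_gt (2 * (k : ℤ)) (2 * ((n : ℤ) - k - 2 * h) - 1) with h1 | h1
      · obtain ⟨a, ha⟩ : ∃ a : ℕ, (a : ℤ) + 1 = k + 2 * h := ⟨(k + 2 * h - 1).toNat, by omega⟩
        have := Re_end1 hk hk0 m A a (k + h).toNat (by omega) (by omega)
        rw [show m + 2 * h / 2 + k = m + ((k + h).toNat : ℤ) by omega, ← this]
        congr 1 <;> omega
      · obtain ⟨a, ha⟩ : ∃ a : ℕ, a + 1 = n - k := ⟨n - k - 1, by omega⟩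
        obtain ⟨b, hb⟩ : ∃ b : ℕ, (b : ℤ) = n - k - 1 - 2 * h := ⟨(n - k - 1 - 2 * h).toNat, by omega⟩
        have := Re_end2 hk hk0 m A a b (n - k - h).toNat ha (by omega) (by omega)
        rw [show m + 2 * h / 2 + k = (m - ((n - k - h : ℤ).toNat : ℤ)) + n by omega, Int.cast_add,
          Int.cast_natCast, ZMod.natCast_self, add_zero, ← this]
        congr 1 <;> omega
    · intro a b h1 h2 h3 h4
      obtain ⟨b, rfl⟩ : ∃ b', b = b' + 1 := ⟨b - 1, by omega⟩
      rcases Nat.eq_zero_or_pos a with rfl | h5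
      · exact evenA0 hk.le (by omega) m A hy (c := (b + 1) / 2) (by omega) (by omega) (by omega)
      · obtain ⟨a, rfl⟩ : ∃ a', a = a' + 1 := ⟨a - 1, by omega⟩
        exact evenA hk.le (by omega) m A hy (c := (a + 1 + (b + 1)) / 2) (l := n - k - a - 2)
          (by omega) (by omega) (by omega)
    · intro a b h1 h2 h3 h4 h5
      obtain ⟨b, rfl⟩ : ∃ b', b = b' + 1 := ⟨b - 1, by omega⟩
      obtain ⟨a, rfl⟩ : ∃ a', a = a' + 1 := ⟨a - 1, by omega⟩
      exact evenB hk.le (by omega) m A hy (c := (a + 1 + (b + 1)) / 2) (l := n - k - a - 2)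
          (by omega) (by omega) (by omega)
  · rw [phi, if_neg hd, tele k n _ (Ro n k m A) d hd1 hd2 hk0 hk ?_ ?_ _ (fun p => rfl)]
    · have e0 : Ro n k m A ((((min (2 * k) (2 * ((n : ℤ) - k - d) - 1).toNat : ℕ) : ℤ) + 1) / 2
          + d).toNat (min (2 * k) (2 * ((n : ℤ) - k - d) - 1).toNat / 2) = 0 := by
        rcases le_or_gt (2 * (k : ℤ)) (2 * ((n : ℤ) - k - d) - 1) with h1 | h1
        · obtain ⟨a, ha⟩ : ∃ a : ℕ, (a : ℤ) + 1 = k + d := ⟨(k + d - 1).toNat, by omega⟩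
          rw [← Ro_end1 hk hk0 m A a (k + (d + 1) / 2).toNat (by omega) (by omega)]
          congr 1 <;> omega
        · rw [Ro, if_pos (by omega)]
      rw [e0, zero_sub]
      rcases le_or_gt 0 d with h0 | h0
      · obtain ⟨a, ha⟩ : ∃ a : ℕ, (a : ℤ) = d := ⟨d.toNat, by omega⟩
        have := Ro_start1 hk hk0 m A a ((d + 1) / 2).toNat (by omega) (by omega)
        rw [show m - (d + 1) / 2 = m - (((d + 1) / 2).toNat : ℤ) by omega,
          eq_comm, ← neg_eq_iff_eq_neg.2 this, eq_comm]
        congr 2 <;> omega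
      · obtain ⟨b, hb⟩ : ∃ b : ℕ, (b : ℤ) = -d := ⟨(-d).toNat, by omega⟩
        have := Ro_start2 hk hk0 m A b ((b + 1) / 2) (by omega) (by omega)
        rw [show m - (d + 1) / 2 = m - (((b + 1) / 2 : ℕ) : ℤ) + b by omega,
          eq_comm, ← neg_eq_iff_eq_neg.2 this, eq_comm]
        congr 2 <;> omega
    · intro a b h1 h2 h3 h4
      obtain ⟨b, rfl⟩ : ∃ b', b = b' + 1 := ⟨b - 1, by omega⟩
      by_cases h5 : a + 1 = n - k
      · exact oddA1 hk.le (by omega) m A hy (c := (a + b + 2) / 2) (by omega) (by omega) (by omega)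
      · exact oddA hk.le (by omega) m A hy (c := (a + b + 2) / 2) (l := n - k - a - 2)
          (by omega) (by omega) (by omega)
    · intro a b h1 h2 h3 h4 h5
      obtain ⟨b, rfl⟩ : ∃ b', b = b' + 1 := ⟨b - 1, by omega⟩
      obtain ⟨a, rfl⟩ : ∃ a', a = a' + 1 := ⟨a - 1, by omega⟩
      exact oddB hk.le (by omega) m A hy (c := (a + 1 + (b + 1) + 1) / 2) (l := n - k - a - 2)
          (by omega) (by omega) (by omega)

end

lemma phi_inj {n k : ℕ} (m : ℤ) {d e : ℤ} (hd : d ∈ Finset.Icc (-(k : ℤ)) ((n : ℤ) - k - 1))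
    (he : e ∈ Finset.Icc (-(k : ℤ)) ((n : ℤ) - k - 1))
    (h : ((phi k m d : ℤ) : ZMod n) = ((phi k m e : ℤ) : ZMod n)) : d = e := by
  rw [Finset.mem_Icc] at hd he
  have := cast_inj h
  unfold phi at this
  split_ifs at this
  · have := this (by omega) (by omega); omega
  · have := this (by omega) (by omega); omega
  · have := this (by omega) (by omega); omega
  · have := this (by omega) (by omega); omega

lemma sum_phi {n k : ℕ} (hk : k < n) (m : ℤ) (F : ZMod n → ℂ) :
    ∑ i ∈ Finset.Icc 1 n, F (i : ZMod n) =
      ∑ d ∈ Finset.Icc (-(k : ℤ)) ((n : ℤ) - k - 1), F ((phi k m d : ℤ) : ZMod n) := by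
  have : NeZero n := ⟨by omega⟩
  have key : ∀ (S : Finset ℤ) (g : ℤ → ZMod n), S.card = n → Set.InjOn g S →
      ∑ d ∈ S, F (g d) = ∑ x : ZMod n, F x := by
    intro S g hS hg
    rw [← Finset.sum_image (f := F) hg]
    congr 1
    apply Finset.eq_univ_of_card
    rw [Finset.card_image_of_injOn hg, hS, ZMod.card]
  rw [key _ _ (by simp) (fun d hd e he h => phi_inj m hd he h)]
  rw [← key (Finset.Icc 1 (n : ℤ)) (fun d => (d : ZMod n)) (by simp)]
  · refine Finset.sum_nbij' (fun i => (i : ℤ)) (fun i => i.toNat) ?_ ?_ ?_ ?_ ?_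
    · intro i hi; simp at hi ⊢; omega
    · intro i hi; simp at hi ⊢; omega
    · intro i hi; simp
    · intro i hi; simp at hi ⊢; omega
    · intro i hi; simp
  · intro d hd e he h
    simp at hd he h
    exact cast_inj h (by omega) (by omega)

end SP


/-- the superpotential of the Grassmannian, expressed in the Plücker
coordinates attached to the rotated checkboard graph `σ^m G^ch_{k,n}`. -/
theorem superpotential_rotated_checkboard
    (n k : ℕ) (hn : 4 ≤ n) (hk : 2 ≤ k) (hkn : k ≤ n - 2) (m : ℤ)
    (A : Matrix (Fin (n - k)) (ZMod n) ℂ)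
    (hy : ∀ i ≤ n - k, ∀ j ≤ k, ychRot k n m A i j ≠ 0)
    (q : ℂ) :
    (∑ i ∈ Finset.Icc 1 n,
        (plucker n (n - k) A (Jplus n k (i : ZMod n)) /
          plucker n (n - k) A (Jcyc n k (i : ZMod n))) * q ^ (if i = k then 1 else 0)) =
      (ychRot k n m A 1 (k - 1) / ychRot k n m A 0 k) *
        q ^ (if (m : ZMod n) = (((k + 1) / 2 : ℕ) : ZMod n) then 1 else 0) +
      (ychRot k n m A (n - k - 1) 1 / ychRot k n m A (n - k) 0) *
        q ^ (if (m : ZMod n) = (((n + k + 1) / 2 : ℕ) : ZMod n) then 1 else 0) +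
      ∑ d ∈ Finset.Icc (1 - (k : ℤ)) ((n : ℤ) - k - 2),
        (sumA k n (ychRot k n m A) d + sumB k n (ychRot k n m A) d) * q ^ (epsExp n k m d) := by
  have hk' : k < n := by omega
  have hk0 : 0 < k := by omega
  have hL : ∀ i ∈ Finset.Icc 1 n, (plucker n (n - k) A (Jplus n k (i : ZMod n)) /
          plucker n (n - k) A (Jcyc n k (i : ZMod n))) * q ^ (if i = k then 1 else 0) =
      (fun x : ZMod n => SP.T n k A x * q ^ (if x = (k : ZMod n) then 1 else 0)) (i : ZMod n) := by
    intro i hi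
    rw [Finset.mem_Icc] at hi
    have : i = k ↔ (i : ZMod n) = (k : ZMod n) := by
      constructor
      · rintro rfl; rfl
      · intro h
        have := SP.cast_inj (n := n) (a := i) (b := k) (by exact_mod_cast h) (by omega) (by omega)
        omega
    simp only [SP.T, this]
  rw [Finset.sum_congr rfl hL, SP.sum_phi hk' m
    (fun x : ZMod n => SP.T n k A x * q ^ (if x = (k : ZMod n) then 1 else 0))]
  have hS : Finset.Icc (-(k : ℤ)) ((n : ℤ) - k - 1) =
      insert (-(k : ℤ)) (insert ((n : ℤ) - k - 1) (Finset.Icc (1 - (k : ℤ)) ((n : ℤ) - k - 2))) := by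
    ext x
    simp only [Finset.mem_insert, Finset.mem_Icc]
    omega
  rw [hS, Finset.sum_insert (by simp only [Finset.mem_insert, Finset.mem_Icc]; omega),
    Finset.sum_insert (by simp only [Finset.mem_Icc]; omega), ← add_assoc]
  have hcast : ∀ a b c d : ℤ, ((a - b = c - d ∨ a - b = d - c) ∨
      (a - b + n = c - d ∨ a - b + n = d - c)) →
      ((a : ZMod n) = (b : ZMod n) ↔ (c : ZMod n) = (d : ZMod n)) := by
    intro a b c d h
    rw [← sub_eq_zero, ← sub_eq_zero (a := (c : ZMod n))]
    have h' : (a : ZMod n) - b = c - d ∨ (a : ZMod n) - b = d - c := by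
      rcases h with (h | h) | (h | h)
      · left; exact_mod_cast congrArg (Int.cast : ℤ → ZMod n) h
      · right; exact_mod_cast congrArg (Int.cast : ℤ → ZMod n) h
      · left
        have := congrArg (Int.cast : ℤ → ZMod n) h
        push_cast at this
        simpa using this
      · right
        have := congrArg (Int.cast : ℤ → ZMod n) h
        push_cast at this
        simpa using this
    rcases h' with h | h
    · rw [h]
    · rw [h, sub_eq_zero, sub_eq_zero, eq_comm]
  have hadd : ∀ a b c a' b' c' : ℂ, a = a' → b = b' → c = c' → a + b + c = a' + b' + c' := by
    rintro a b c _ _ _ rfl rfl rfl; rfl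
  refine hadd _ _ _ _ _ _ ?_ ?_ ?_
  · beta_reduce
    rw [SP.first_term hk' hk0 m A]
    have e : SP.phi k m (-(k : ℤ)) = m - ((k + 1) / 2 : ℕ) + k := by
      unfold SP.phi; split_ifs <;> omega
    have e2 := hcast (m - ((k + 1) / 2 : ℕ) + k) k m ((k + 1) / 2 : ℕ) (by omega)
    rw [Int.cast_natCast, Int.cast_natCast] at e2
    simp only [e, e2]
  · beta_reduce
    rw [SP.second_term hk' hk0 m A]
    have e : ((SP.phi k m ((n : ℤ) - k - 1) : ℤ) : ZMod n) =
        ((m - ((n - k + 1) / 2 : ℕ) : ℤ) : ZMod n) := by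
      have : SP.phi k m ((n : ℤ) - k - 1) = m - ((n - k + 1) / 2 : ℕ) ∨
          SP.phi k m ((n : ℤ) - k - 1) = m - ((n - k + 1) / 2 : ℕ) + n := by
        unfold SP.phi; split_ifs <;> omega
      rcases this with h | h
      · rw [h]
      · rw [h, Int.cast_add _ (n : ℤ), Int.cast_natCast n, ZMod.natCast_self, add_zero]
    have e2 := hcast (m - ((n - k + 1) / 2 : ℕ)) k m ((n + k + 1) / 2 : ℕ) (by omega)
    rw [Int.cast_natCast, Int.cast_natCast] at e2
    simp only [e, e2]
  · refine Finset.sum_congr rfl fun d hd => ?_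
    rw [Finset.mem_Icc] at hd
    rw [SP.diag hk' hk0 m A hy d hd.1 hd.2]
    refine congrArg (fun e : ℕ => SP.T n k A (SP.phi k m d : ZMod n) * q ^ e) ?_
    unfold epsExp SP.phi
    by_cases h2 : 2 ∣ d
    · have e2 := hcast (m + d / 2 + k) k m (-(d / 2)) (by omega)
      rw [Int.cast_natCast] at e2
      simp only [h2, if_true, e2, true_and, not_true, false_and, if_false, add_zero]
    · have e2 := hcast (m - (d + 1) / 2) k m ((d + 1) / 2 + k) (by omega)
      rw [Int.cast_natCast] at e2
      simp only [h2, if_false, e2, true_and, not_false_eq_true, false_and, zero_add]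
end

section
/- Let n ≥ 4 and 2 ≤ k ≤ n−2 be integers and let m be an integer. Let L = { σ^m J^ch_{i,j} : 0 ≤ i ≤ n−k, 0 ≤ j ≤ k } ∖ { J_n }, a set of exactly k(n−k) labels, and for v ∈ ℝ^L write v_{i,j} = v(σ^m J^ch_{i,j}) if σ^m J^ch_{i,j} ≠ J_n and v_{i,j} = 0 if σ^m J^ch_{i,j} = J_n. Let Γ_m ⊆ ℝ^L be the superpotential polytope defined by the inequalities: δ(m ≡ ⌈k/2⌉) ≥ v_{0,k} − v_{1,k−1}; δ(m ≡ ⌈(n+k)/2⌉) ≥ v_{n−k,0} − v_{n−k−1,1}; ε_{m,a−b} ≥ v_{a,b} − v_{a+1,b−1} − v_{a,b+1} + v_{a+1,b} for all 0 ≤ a ≤ n−k−1, 1 ≤ b ≤ k−1; and ε_{m,a−b} ≥ v_{a,b} − v_{a+1,b−1} − v_{a−1,b} + v_{a,b−1} for all 1 ≤ a ≤ n−k−1, 1 ≤ b ≤ k, where ε_{m,d} = δ(d even and m ≡ −d/2 mod n) + δ(d odd and m ≡ (d+1)/2 + k mod n) and δ(P) = 1 if P holds and 0 otherwise. Let GT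 ⊆ ℝ^{k(n−k)}, with coordinates f_{a,b} for 0 ≤ a ≤ n−k−1 and 1 ≤ b ≤ k, be the polytope defined by: f_{0,k} ≤ 1; f_{n−k−1,1} ≥ 0; f_{a,b} ≤ f_{a,b+1} for all 0 ≤ a ≤ n−k−1, 1 ≤ b ≤ k−1; and f_{a,b} ≤ f_{a−1,b} for all 1 ≤ a ≤ n−k−1, 1 ≤ b ≤ k. Then Γ_m is unimodular equivalent to GT: there exist a ℤ-linear bijection M between the coordinate lattices ℤ^L and ℤ^{k(n−k)} and an integer vector t ∈ ℤ^{k(n−k)} such that the affine map v ↦ M(v) + t maps Γ_m bijectively onto GT. -/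
open Finset

/-- The label set `L`: all labels `σ^m J^ch_{i,j}` with the frozen label
`J_n = [n−k]` removed. -/
def Lset (k n : ℕ) (m : ℤ) : Finset (Finset (ZMod n)) :=
  (((Finset.range (n - k + 1)) ×ˢ (Finset.range (k + 1))).image
    (fun p => JchRot k n m p.1 p.2)) \ {seg n (n - k)}

/-- The coordinate `v_{i,j}` of `v ∈ ℝ^L`:  the value of `v` at the label
`σ^m J^ch_{i,j}` if that label lies in `L`, and `0` if the label is `J_n`. -/
def Vco (k n : ℕ) (m : ℤ) (v : ↥(Lset k n m) → ℝ) (i j : ℕ) : ℝ :=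
  if h : JchRot k n m i j ∈ Lset k n m then v ⟨JchRot k n m i j, h⟩ else 0

/-- The exponent `ε_{m,d}`, as a real number. -/
noncomputable def epsExpR (n k : ℕ) (m d : ℤ) : ℝ :=
  (if 2 ∣ d ∧ (m : ZMod n) = ((-(d / 2) : ℤ) : ZMod n) then 1 else 0) +
  (if ¬ 2 ∣ d ∧ (m : ZMod n) = (((d + 1) / 2 + (k : ℤ) : ℤ) : ZMod n) then 1 else 0)

/-- The superpotential polytope `Γ_m ⊆ ℝ^L` of the rotated checkboard graph
`σ^m G^ch_{k,n}` (equal to its Newton–Okounkov body by Rietsch–Williams). -/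
noncomputable def GammaPoly (k n : ℕ) (m : ℤ) : Set (↥(Lset k n m) → ℝ) :=
  {v |
    (Vco k n m v 0 k - Vco k n m v 1 (k - 1) ≤
      (if (m : ZMod n) = (((k + 1) / 2 : ℕ) : ZMod n) then (1 : ℝ) else 0)) ∧
    (Vco k n m v (n - k) 0 - Vco k n m v (n - k - 1) 1 ≤
      (if (m : ZMod n) = (((n + k + 1) / 2 : ℕ) : ZMod n) then (1 : ℝ) else 0)) ∧
    (∀ a b : ℕ, a ≤ n - k - 1 → 1 ≤ b → b ≤ k - 1 →
      Vco k n m v a b - Vco k n m v (a + 1) (b - 1) - Vco k n m v a (b + 1) +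
          Vco k n m v (a + 1) b ≤ epsExpR n k m ((a : ℤ) - (b : ℤ))) ∧
    (∀ a b : ℕ, 1 ≤ a → a ≤ n - k - 1 → 1 ≤ b → b ≤ k →
      Vco k n m v a b - Vco k n m v (a + 1) (b - 1) - Vco k n m v (a - 1) b +
          Vco k n m v a (b - 1) ≤ epsExpR n k m ((a : ℤ) - (b : ℤ)))}

/-- The Gelfand–Tsetlin polytope `GT ⊆ ℝ^{k(n−k)}`, with coordinates `f_{a,b}` for
`0 ≤ a ≤ n−k−1`, `1 ≤ b ≤ k` encoded as `f (a, b−1)`.  It is defined by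
`f_{0,k} ≤ 1`, `f_{n−k−1,1} ≥ 0`, `f_{a,b} ≤ f_{a,b+1}` and `f_{a,b} ≤ f_{a−1,b}`. -/
def GTPoly (k n : ℕ) (hnk : 0 < n - k) (hk : 0 < k) :
    Set (Fin (n - k) × Fin k → ℝ) :=
  {f |
    f (⟨0, hnk⟩, ⟨k - 1, by omega⟩) ≤ 1 ∧
    0 ≤ f (⟨n - k - 1, by omega⟩, ⟨0, hk⟩) ∧
    (∀ (a : Fin (n - k)) (b : Fin k) (hb : (b : ℕ) + 1 < k),
      f (a, b) ≤ f (a, ⟨(b : ℕ) + 1, hb⟩)) ∧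
    (∀ (a : Fin (n - k)) (b : Fin k), 0 < (a : ℕ) →
      f (a, b) ≤ f (⟨(a : ℕ) - 1, by omega⟩, b))}

theorem aux_cast_eq {n : ℕ} {a b : ℤ} (h : (a : ZMod n) = (b : ZMod n))
    (h1 : a - b < n) (h2 : b - a < n) : a = b := by
  rw [ZMod.intCast_eq_intCast_iff_dvd_sub] at h
  obtain ⟨q, hq⟩ := h
  rcases lt_trichotomy q 0 with h0 | h0 | h0
  · nlinarith
  · subst h0; simp at hq; omega
  · nlinarith

theorem aux_surj {n : ℕ} [NeZero n] (r : ℕ → ℤ)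
    (hr : ∀ s s', s < n → s' < n → r s = r s' → s = s')
    (hb : ∀ s s', s < n → s' < n → r s - r s' < n) (z : ZMod n) :
    ∃ s < n, ((r s : ℤ) : ZMod n) = z := by
  have hinj : Function.Injective (fun s : Fin n => ((r s : ℤ) : ZMod n)) := by
    intro s s' h
    exact Fin.ext (hr _ _ s.2 s'.2 (aux_cast_eq h (hb _ _ s.2 s'.2) (hb _ _ s'.2 s.2)))
  have hbij := (Fintype.bijective_iff_injective_and_card
    (fun s : Fin n => ((r s : ℤ) : ZMod n))).2 ⟨hinj, by simp [ZMod.card]⟩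
  obtain ⟨s, hs⟩ := hbij.2 z
  exact ⟨s, s.2, hs⟩

theorem aux_valsub {n : ℕ} [NeZero n] (y : ZMod n) (t : ℕ) (ht : t ≤ n) :
    (y - (t : ZMod n)).val = if t ≤ y.val then y.val - t else y.val + n - t := by
  have hy := ZMod.val_lt y
  split_ifs with h
  · have : y - (t : ZMod n) = ((y.val - t : ℕ) : ZMod n) := by
      rw [Nat.cast_sub h, ZMod.natCast_zmod_val]
    rw [this, ZMod.val_natCast_of_lt (by omega)]
  · have : y - (t : ZMod n) = ((y.val + n - t : ℕ) : ZMod n) := by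
      rw [Nat.cast_sub (by omega), Nat.cast_add, ZMod.natCast_zmod_val]; simp
    rw [this, ZMod.val_natCast_of_lt (by omega)]

theorem aux_mem_seg {n : ℕ} [NeZero n] (t : ℕ) (ht : t ≤ n) (y : ZMod n) :
    y ∈ seg n t ↔ (y - 1).val < t := by
  unfold seg
  simp only [Finset.mem_image, Finset.mem_Icc]
  constructor
  · rintro ⟨s, ⟨h1, h2⟩, rfl⟩
    have : (s : ZMod n) - 1 = ((s - 1 : ℕ) : ZMod n) := by
      rw [Nat.cast_sub h1]; simp
    rw [this, ZMod.val_natCast_of_lt (by omega)]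
    omega
  · intro h
    refine ⟨(y - 1).val + 1, ⟨by omega, by omega⟩, ?_⟩
    rw [Nat.cast_add, ZMod.natCast_zmod_val]; simp

/-- the base point -/
def eB (n : ℕ) (m : ℤ) (s : ℕ) : ZMod n := ((m - ((s + 1) / 2 : ℕ) + 1 : ℤ) : ZMod n)

theorem aux_mem {n k : ℕ} [NeZero n] (hkn : k ≤ n) (m : ℤ) (i j : ℕ) (hi : i ≤ n - k) (hj : j ≤ k)
    (x : ZMod n) :
    x ∈ JchRot k n m i j ↔
      ((x - eB n m (i + j)).val < i ∨
        (i + j ≤ (x - eB n m (i + j)).val ∧ (x - eB n m (i + j)).val < n - k + j)) := by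
  have h1 : x ∈ JchRot k n m i j ↔ (x - (m : ZMod n) + (((i + j + 1) / 2 : ℕ) : ZMod n)) ∈
      (seg n i ∪ (seg n (n - k + j) \ seg n (i + j))) := by
    unfold JchRot Jch
    constructor
    · intro h
      obtain ⟨y, hy, rfl⟩ := Finset.mem_image.1 h
      obtain ⟨z, hz, rfl⟩ := Finset.mem_image.1 hy
      simpa using hz
    · intro h
      refine Finset.mem_image.2 ⟨_, Finset.mem_image.2 ⟨_, h, rfl⟩, ?_⟩
      ring
  have h2 : x - (m : ZMod n) + (((i + j + 1) / 2 : ℕ) : ZMod n) - 1 = x - eB n m (i + j) := by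
    unfold eB; simp only [Int.cast_add, Int.cast_sub, Int.cast_one, Int.cast_natCast]; ring
  rw [h1, Finset.mem_union, Finset.mem_sdiff, aux_mem_seg _ (by omega), aux_mem_seg _ (by omega),
    aux_mem_seg _ (by omega), h2]
  omega

theorem aux_half (n s : ℕ) : ((s : ℕ) : ZMod n) =
    ((s / 2 : ℕ) : ZMod n) + (((s + 1) / 2 : ℕ) : ZMod n) := by
  rw [← Nat.cast_add]
  congr 1
  omega

theorem aux_high {n k : ℕ} [NeZero n] (hkn : k ≤ n) (m : ℤ) (i j : ℕ) (hi : i ≤ n - k) (hj : j ≤ k)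
    (h : j = 0 ∨ i = n - k) (x : ZMod n) :
    x ∈ JchRot k n m i j ↔
      (x - ((m - ((i + j + 1) / 2 : ℕ) + 1 : ℤ) : ZMod n)).val < n - k := by
  rw [aux_mem hkn m i j hi hj]
  unfold eB
  omega

theorem aux_low {n k : ℕ} [NeZero n] (hkn : k ≤ n) (m : ℤ) (i j : ℕ) (hi : i ≤ n - k) (hj : j ≤ k)
    (h : i = 0 ∨ j = k) (x : ZMod n) :
    x ∈ JchRot k n m i j ↔
      (x - ((m + ((i + j) / 2 : ℕ) + 1 : ℤ) : ZMod n)).val < n - k := by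
  rw [aux_mem hkn m i j hi hj]
  have h2 : x - ((m + ((i + j) / 2 : ℕ) + 1 : ℤ) : ZMod n) =
      (x - eB n m (i + j)) - ((i + j : ℕ) : ZMod n) := by
    have h4 := aux_half n (i + j)
    rw [h4]
    unfold eB
    simp only [Int.cast_add, Int.cast_sub, Int.cast_one, Int.cast_natCast]
    ring
  rw [h2, aux_valsub _ _ (by omega)]
  have := ZMod.val_lt (x - eB n m (i + j))
  split_ifs <;> omega

theorem aux_start {n k : ℕ} [NeZero n] (hn : 2 ≤ n) (hkn : k ≤ n) (m : ℤ) (i j : ℕ) (hi : i ≤ n - k)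
    (hj : j ≤ k) (x : ZMod n) (h1 : x ∈ JchRot k n m i j) (h2 : x - 1 ∉ JchRot k n m i j) :
    x = ((m - ((i + j + 1) / 2 : ℕ) + 1 : ℤ) : ZMod n) ∨
    x = ((m + ((i + j) / 2 : ℕ) + 1 : ℤ) : ZMod n) := by
  rw [aux_mem hkn m i j hi hj] at h1 h2
  have h3 : x - 1 - eB n m (i + j) = (x - eB n m (i + j)) - ((1 : ℕ) : ZMod n) := by
    push_cast; ring
  rw [h3, aux_valsub _ _ (by omega)] at h2
  have hx : x = eB n m (i + j) + ((x - eB n m (i + j)).val : ZMod n) := by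
    rw [ZMod.natCast_zmod_val]; ring
  split_ifs at h2 with h
  · right
    have hw : (x - eB n m (i + j)).val = i + j := by omega
    rw [hw] at hx
    rw [hx]
    have h4 := aux_half n (i + j)
    rw [h4]
    unfold eB
    simp only [Int.cast_add, Int.cast_sub, Int.cast_one, Int.cast_natCast]
    ring
  · left
    have hw : (x - eB n m (i + j)).val = 0 := by omega
    rw [hw] at hx
    rw [hx]
    unfold eB
    simp

/-- zigzag -/
def hz (s : ℕ) : ℤ := if s % 2 = 0 then ((s / 2 : ℕ) : ℤ) else -(((s + 1) / 2 : ℕ) : ℤ)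

theorem aux_isstart {n k : ℕ} [NeZero n] (hn : 2 ≤ n) (hkn : k ≤ n) (m : ℤ) (i j : ℕ)
    (hi : i ≤ n - k) (hj : j ≤ k) (hs : i + j < n) (hk : 0 < k) (hN : 0 < n - k)
    (hE : (i + j) % 2 = 0 → (i < n - k ∧ 0 < j) ∨ (i = 0 ∧ j = 0))
    (hO : (i + j) % 2 = 1 → 0 < i ∧ j < k) :
    ((m + hz (i + j) + 1 : ℤ) : ZMod n) ∈ JchRot k n m i j ∧
    ((m + hz (i + j) + 1 : ℤ) : ZMod n) - 1 ∉ JchRot k n m i j := by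
  rw [aux_mem hkn m i j hi hj, aux_mem hkn m i j hi hj]
  have h3 : ∀ x : ZMod n, x - 1 - eB n m (i + j) = (x - eB n m (i + j)) - ((1 : ℕ) : ZMod n) := by
    intro x; push_cast; ring
  rw [h3, aux_valsub _ _ (by omega)]
  rcases Nat.mod_two_eq_zero_or_one (i + j) with h | h
  · have hw : ((m + hz (i + j) + 1 : ℤ) : ZMod n) - eB n m (i + j) = ((i + j : ℕ) : ZMod n) := by
      have h4 := aux_half n (i + j)
      rw [h4]
      unfold eB hz
      rw [if_pos h]
      simp only [Int.cast_add, Int.cast_sub, Int.cast_one, Int.cast_natCast]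
      ring
    rw [hw, ZMod.val_natCast_of_lt hs]
    have := hE h
    split_ifs <;> omega
  · have hw : ((m + hz (i + j) + 1 : ℤ) : ZMod n) - eB n m (i + j) = ((0 : ℕ) : ZMod n) := by
      unfold eB hz
      rw [if_neg (by omega)]
      push_cast
      ring
    rw [hw, ZMod.val_natCast_of_lt (by omega)]
    have := hO h
    split_ifs <;> omega

theorem aux_inj {n k : ℕ} [NeZero n] (hn : 2 ≤ n) (hkn : k ≤ n) (m : ℤ) (i j i' j' : ℕ)
    (hi : i ≤ n - k) (hj : j ≤ k) (hs : i + j < n)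
    (hi' : i' ≤ n - k) (hj' : j' ≤ k) (hs' : i' + j' < n) (hk : 0 < k) (hN : 0 < n - k)
    (hE : (i + j) % 2 = 0 → (i < n - k ∧ 0 < j) ∨ (i = 0 ∧ j = 0))
    (hO : (i + j) % 2 = 1 → 0 < i ∧ j < k)
    (hE' : (i' + j') % 2 = 0 → (i' < n - k ∧ 0 < j') ∨ (i' = 0 ∧ j' = 0))
    (hO' : (i' + j') % 2 = 1 → 0 < i' ∧ j' < k)
    (h : JchRot k n m i j = JchRot k n m i' j') : i = i' ∧ j = j' := by
  have key : ∀ i j i' j' : ℕ, i ≤ n - k → j ≤ k → i + j < n → i' ≤ n - k → j' ≤ k → i' + j' < n →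
      ((i + j) % 2 = 0 → (i < n - k ∧ 0 < j) ∨ (i = 0 ∧ j = 0)) →
      ((i + j) % 2 = 1 → 0 < i ∧ j < k) →
      JchRot k n m i j = JchRot k n m i' j' →
      (hz (i + j) = - (((i' + j' + 1) / 2 : ℕ) : ℤ) ∨ hz (i + j) = (((i' + j') / 2 : ℕ) : ℤ)) := by
    intro i j i' j' hi hj hs hi' hj' hs' hE hO h
    obtain ⟨a1, a2⟩ := aux_isstart hn hkn m i j hi hj hs hk hN hE hO
    rw [h] at a1 a2
    rcases aux_start hn hkn m i' j' hi' hj' _ a1 a2 with h1 | h1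
    · left
      have := aux_cast_eq h1 (by unfold hz; split_ifs <;> omega) (by unfold hz; split_ifs <;> omega)
      omega
    · right
      have := aux_cast_eq h1 (by unfold hz; split_ifs <;> omega) (by unfold hz; split_ifs <;> omega)
      omega
  have k1 := key i j i' j' hi hj hs hi' hj' hs' hE hO h
  have k2 := key i' j' i j hi' hj' hs' hi hj hs hE' hO' h.symm
  have hss : i + j = i' + j' := by
    unfold hz at k1 k2
    split_ifs at k1 k2 <;> omega
  have same : ∀ i j i' j' : ℕ, i ≤ n - k → j ≤ k → i' ≤ n - k → j' ≤ k → i + j = i' + j' →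
      i + j < n → JchRot k n m i j = JchRot k n m i' j' → ¬ i < i' := by
    intro i j i' j' hi hj hi' hj' hss hs h hlt
    have a := Finset.ext_iff.1 h (eB n m (i + j) + ((i : ℕ) : ZMod n))
    rw [aux_mem hkn m i j hi hj, aux_mem hkn m i' j' hi' hj', ← hss, add_sub_cancel_left,
      ZMod.val_natCast_of_lt (by omega)] at a
    omega
  have s1 := same i j i' j' hi hj hi' hj' hss hs h
  have s2 := same i' j' i j hi' hj' hi hj hss.symm hs' h.symm
  omega

/-- zigzag rep -/
def rep (a b : ℕ) : ℕ × ℕ := if (a + b) % 2 = 0 then (a + 1, b) else (a, b + 1)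

theorem aux_card_ge {n k : ℕ} (hn : 4 ≤ n) (hk : 2 ≤ k) (hkn : k ≤ n - 2) (m : ℤ) :
    k * (n - k) ≤ (Lset k n m).card := by
  have : NeZero n := ⟨by omega⟩
  unfold Lset
  have h1 : (((Finset.range (n - k + 1)) ×ˢ (Finset.range (k + 1))).image
    (fun p => JchRot k n m p.1 p.2)).card ≤ ((((Finset.range (n - k + 1)) ×ˢ (Finset.range (k + 1))).image
    (fun p => JchRot k n m p.1 p.2)) \ {seg n (n - k)}).card + 1 := by
    have := Finset.card_le_card_sdiff_add_card (t := {seg n (n - k)}) (s := (((Finset.range (n - k + 1)) ×ˢ (Finset.range (k + 1))).image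
    (fun p => JchRot k n m p.1 p.2)))
    rw [Finset.card_singleton] at this
    exact this
  have h2 : k * (n - k) + 1 ≤ (((Finset.range (n - k + 1)) ×ˢ (Finset.range (k + 1))).image
    (fun p => JchRot k n m p.1 p.2)).card := by
    let g : Option (Fin (n - k) × Fin k) → Finset (ZMod n) := fun o =>
      match o with
      | none => JchRot k n m 0 0
      | some p => JchRot k n m (rep p.1 p.2).1 (rep p.1 p.2).2
    have hg : Function.Injective g := by
      have hrep : ∀ (a : Fin (n - k)) (b : Fin k), (rep a b).1 ≤ n - k ∧ (rep a b).2 ≤ k ∧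
          (rep a b).1 + (rep a b).2 = a + b + 1 ∧
          (((rep a b).1 + (rep a b).2) % 2 = 0 → ((rep a b).1 < n - k ∧ 0 < (rep a b).2) ∨ ((rep a b).1 = 0 ∧ (rep a b).2 = 0)) ∧
          (((rep a b).1 + (rep a b).2) % 2 = 1 → 0 < (rep a b).1 ∧ (rep a b).2 < k) := by
        intro a b
        have := a.2
        have := b.2
        unfold rep
        split_ifs <;> simp only <;> omega
      intro o o' h
      rcases o with _ | ⟨a, b⟩ <;> rcases o' with _ | ⟨a', b'⟩
      · rfl
      · exfalso
        obtain ⟨r1, r2, r3, r4, r5⟩ := hrep a' b'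
        have := aux_inj (by omega) (by omega) m 0 0 _ _ (by omega) (by omega) (by omega) r1 r2
          (by omega) (by omega) (by omega) (by omega) (by omega) r4 r5 h
        omega
      · exfalso
        obtain ⟨r1, r2, r3, r4, r5⟩ := hrep a b
        have := aux_inj (by omega) (by omega) m 0 0 _ _ (by omega) (by omega) (by omega) r1 r2
          (by omega) (by omega) (by omega) (by omega) (by omega) r4 r5 h.symm
        omega
      · obtain ⟨r1, r2, r3, r4, r5⟩ := hrep a b
        obtain ⟨q1, q2, q3, q4, q5⟩ := hrep a' b'
        have := aux_inj (by omega) (by omega) m _ _ _ _ r1 r2 (by omega) q1 q2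
          (by omega) (by omega) (by omega) r4 r5 q4 q5 h
        have h2 : (a : ℕ) = a' ∧ (b : ℕ) = b' := by
          unfold rep at this q3 r3
          split_ifs at this q3 r3 <;> simp only at this q3 r3 <;> omega
        rw [Fin.ext h2.1, Fin.ext h2.2]
    have hc : (Finset.univ.image g).card = k * (n - k) + 1 := by
      rw [Finset.card_image_of_injective _ hg]
      simp [mul_comm]
    rw [← hc]
    apply Finset.card_le_card
    intro J hJ
    obtain ⟨o, -, rfl⟩ := Finset.mem_image.1 hJ
    rw [Finset.mem_image]
    rcases o with _ | ⟨a, b⟩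
    · exact ⟨(0, 0), by simp, rfl⟩
    · refine ⟨rep a b, ?_, rfl⟩
      have := a.2
      have := b.2
      unfold rep
      split_ifs <;> simp <;> omega
  omega

theorem aux_hz_surj {n : ℕ} [NeZero n] (z : ZMod n) : ∃ s < n, ((hz s : ℤ) : ZMod n) = z := by
  apply aux_surj
  · intro s s' h h'
    unfold hz
    split_ifs <;> omega
  · intro s s' h h'
    unfold hz
    split_ifs <;> omega

theorem aux_seg {n k : ℕ} (hn : 4 ≤ n) (hk : 2 ≤ k) (hkn : k ≤ n - 2) (m : ℤ) :
    ∃ i j, i ≤ n - k ∧ j ≤ k ∧ JchRot k n m i j = seg n (n - k) := by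
  have : NeZero n := ⟨by omega⟩
  obtain ⟨s, hs, h⟩ := aux_hz_surj (n := n) (-(m : ZMod n))
  rcases Nat.mod_two_eq_zero_or_one s with hp | hp
  · have : ∃ i j, i ≤ n - k ∧ j ≤ k ∧ (i = 0 ∨ j = k) ∧ i + j = s := by
      by_cases hsk : s ≤ k
      · exact ⟨0, s, by omega, by omega, by omega, by omega⟩
      · exact ⟨s - k, k, by omega, by omega, by omega, by omega⟩
    obtain ⟨i, j, hi, hj, hij, rfl⟩ := this
    refine ⟨i, j, hi, hj, ?_⟩
    ext x
    rw [aux_low (by omega) m i j hi hj hij, aux_mem_seg _ (by omega)]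
    have : ((m + ((i + j) / 2 : ℕ) + 1 : ℤ) : ZMod n) = 1 := by
      unfold hz at h
      rw [if_pos hp] at h
      rw [Int.cast_add, Int.cast_add, h]
      simp
    rw [this]
  · have : ∃ i j, i ≤ n - k ∧ j ≤ k ∧ (j = 0 ∨ i = n - k) ∧ i + j = s := by
      by_cases hsk : s ≤ n - k
      · exact ⟨s, 0, by omega, by omega, by omega, by omega⟩
      · exact ⟨n - k, s - (n - k), by omega, by omega, by omega, by omega⟩
    obtain ⟨i, j, hi, hj, hij, rfl⟩ := this
    refine ⟨i, j, hi, hj, ?_⟩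
    ext x
    rw [aux_high (by omega) m i j hi hj hij, aux_mem_seg _ (by omega)]
    have : ((m - ((i + j + 1) / 2 : ℕ) + 1 : ℤ) : ZMod n) = 1 := by
      unfold hz at h
      rw [if_neg (by omega)] at h
      rw [sub_eq_add_neg, Int.cast_add, Int.cast_add, h]
      simp
    rw [this]

theorem aux_link {n k : ℕ} (hn : 4 ≤ n) (hk : 2 ≤ k) (hkn : k ≤ n - 2) (m : ℤ) (s : ℕ)
    (hs : s + 1 ≤ n) :
    ∃ i j i' j', i ≤ n - k ∧ j ≤ k ∧ i' ≤ n - k ∧ j' ≤ k ∧ i + j = s ∧ i' + j' = s + 1 ∧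
      JchRot k n m i j = JchRot k n m i' j' := by
  have : NeZero n := ⟨by omega⟩
  rcases Nat.mod_two_eq_zero_or_one s with hp | hp
  · have : ∀ s ≤ n, ∃ i j, i ≤ n - k ∧ j ≤ k ∧ (i = 0 ∨ j = k) ∧ i + j = s := by
      intro s hs
      by_cases hsk : s ≤ k
      · exact ⟨0, s, by omega, by omega, by omega, by omega⟩
      · exact ⟨s - k, k, by omega, by omega, by omega, by omega⟩
    obtain ⟨i, j, hi, hj, hij, e⟩ := this s (by omega)
    obtain ⟨i', j', hi', hj', hij', e'⟩ := this (s + 1) (by omega)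
    refine ⟨i, j, i', j', hi, hj, hi', hj', e, e', ?_⟩
    ext x
    rw [aux_low (by omega) m i j hi hj hij, aux_low (by omega) m i' j' hi' hj' hij',
      show (i + j) / 2 = (i' + j') / 2 by omega]
  · have : ∀ s ≤ n, ∃ i j, i ≤ n - k ∧ j ≤ k ∧ (j = 0 ∨ i = n - k) ∧ i + j = s := by
      intro s hs
      by_cases hsk : s ≤ n - k
      · exact ⟨s, 0, by omega, by omega, by omega, by omega⟩
      · exact ⟨n - k, s - (n - k), by omega, by omega, by omega, by omega⟩
    obtain ⟨i, j, hi, hj, hij, e⟩ := this s (by omega)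
    obtain ⟨i', j', hi', hj', hij', e'⟩ := this (s + 1) (by omega)
    refine ⟨i, j, i', j', hi, hj, hi', hj', e, e', ?_⟩
    ext x
    rw [aux_high (by omega) m i j hi hj hij, aux_high (by omega) m i' j' hi' hj' hij',
      show (i + j + 1) / 2 = (i' + j' + 1) / 2 by omega]

theorem Vco_congr {n k : ℕ} {m : ℤ} (v : ↥(Lset k n m) → ℝ) {i j i' j' : ℕ}
    (h : JchRot k n m i j = JchRot k n m i' j') : Vco k n m v i j = Vco k n m v i' j' := by
  unfold Vco
  simp only [h]

theorem aux_conn {n k : ℕ} (hn : 4 ≤ n) (hk : 2 ≤ k) (hkn : k ≤ n - 2) (m : ℤ)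
    (v : ↥(Lset k n m) → ℝ) (S : AddSubgroup ℝ)
    (hu : ∀ a b, a < n - k → b < k → Vco k n m v a (b + 1) - Vco k n m v (a + 1) b ∈ S) :
    ∀ x, v x ∈ S := by
  -- same antidiagonal
  have anti : ∀ d i j, i + d ≤ n - k → d ≤ j → j ≤ k →
      Vco k n m v i j - Vco k n m v (i + d) (j - d) ∈ S := by
    intro d
    induction d with
    | zero => intro i j _ _ _; simp [S.zero_mem]
    | succ d ih =>
      intro i j h1 h2 h3
      have a1 := ih i j (by omega) (by omega) h3
      have a2 := hu (i + d) (j - (d + 1)) (by omega) (by omega)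
      rw [show j - (d + 1) + 1 = j - d by omega] at a2
      have := S.add_mem a1 a2
      rw [sub_add_sub_cancel] at this
      exact this
  have anti2 : ∀ i j i' j', i ≤ n - k → j ≤ k → i' ≤ n - k → j' ≤ k → i + j = i' + j' →
      Vco k n m v i j - Vco k n m v i' j' ∈ S := by
    intro i j i' j' h1 h2 h3 h4 h5
    rcases le_total i i' with h | h
    · have := anti (i' - i) i j (by omega) (by omega) h2
      rwa [show i + (i' - i) = i' by omega, show j - (i' - i) = j' by omega] at this
    · have := anti (i - i') i' j' (by omega) (by omega) h4
      rw [show i' + (i - i') = i by omega, show j' - (i - i') = j by omega] at this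
      have := S.neg_mem this
      rwa [neg_sub] at this
  have all : ∀ s i j, i ≤ n - k → j ≤ k → i + j = s → Vco k n m v i j - Vco k n m v 0 0 ∈ S := by
    intro s
    induction s with
    | zero => intro i j h1 h2 h3; exact anti2 _ _ _ _ h1 h2 (by omega) (by omega) (by omega)
    | succ s ih =>
      intro i j h1 h2 h3
      obtain ⟨p, q, p', q', l1, l2, l3, l4, l5, l6, l7⟩ := aux_link hn hk hkn m s (by omega)
      have a1 := ih p q l1 l2 l5
      rw [Vco_congr v l7] at a1
      have a2 := anti2 i j p' q' h1 h2 l3 l4 (by omega)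
      have := S.add_mem a2 a1
      rwa [sub_add_sub_cancel] at this
  obtain ⟨p, q, hp, hq, hpq⟩ := aux_seg hn hk hkn m
  have h0 : Vco k n m v p q = 0 := by
    unfold Vco
    rw [dif_neg]
    rw [hpq]
    simp [Lset]
  have a0 := all _ p q hp hq rfl
  rintro ⟨J, hJ⟩
  have hJ' := hJ
  unfold Lset at hJ'
  rw [Finset.mem_sdiff, Finset.mem_image] at hJ'
  obtain ⟨⟨⟨i, j⟩, hij, rfl⟩, -⟩ := hJ'
  simp only [Finset.mem_product, Finset.mem_range] at hij
  have a1 := all _ i j (by omega) (by omega) rfl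
  have := S.sub_mem a1 a0
  rw [sub_sub_sub_cancel_right, h0, sub_zero] at this
  unfold Vco at this
  rwa [dif_pos hJ] at this

/-- The difference map. -/
noncomputable def Dmap (k n : ℕ) (m : ℤ) :
    (↥(Lset k n m) → ℝ) →ₗ[ℝ] (Fin (n - k) × Fin k → ℝ) where
  toFun v := fun p => Vco k n m v p.1 (p.2 + 1) - Vco k n m v (p.1 + 1) p.2
  map_add' v w := by
    ext p
    simp only [Vco, Pi.add_apply]
    split_ifs <;> ring
  map_smul' c v := by
    ext p
    simp only [Vco, Pi.smul_apply, smul_eq_mul, RingHom.id_apply]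
    split_ifs <;> ring

/-- residues -/
def rres (k : ℕ) (d : ℤ) : ℤ := if 2 ∣ d then -(d / 2) else (d + 1) / 2 + k

theorem eps_eq (n k : ℕ) (m d : ℤ) :
    epsExpR n k m d = if (m : ZMod n) = (rres k d : ZMod n) then 1 else 0 := by
  unfold epsExpR rres
  by_cases h : 2 ∣ d <;> simp [h]

theorem exists_d {n k : ℕ} (hn : 4 ≤ n) (hk : 2 ≤ k) (hkn : k ≤ n - 2) (m : ℤ) :
    ∃ D : ℤ, -(k : ℤ) ≤ D ∧ D ≤ (n : ℤ) - k - 1 ∧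
      ∀ d : ℤ, -(k : ℤ) ≤ d → d ≤ (n : ℤ) - k - 1 → ((m : ZMod n) = (rres k d : ZMod n) ↔ d = D) := by
  have : NeZero n := ⟨by omega⟩
  have hb : ∀ d d' : ℤ, -(k : ℤ) ≤ d → d ≤ (n : ℤ) - k - 1 → -(k : ℤ) ≤ d' →
      d' ≤ (n : ℤ) - k - 1 → rres k d - rres k d' < n := by
    intro d d' _ _ _ _
    unfold rres
    split_ifs <;> omega
  have hi : ∀ d d' : ℤ, -(k : ℤ) ≤ d → d ≤ (n : ℤ) - k - 1 → -(k : ℤ) ≤ d' →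
      d' ≤ (n : ℤ) - k - 1 → rres k d = rres k d' → d = d' := by
    intro d d' _ _ _ _
    unfold rres
    split_ifs <;> omega
  obtain ⟨s, hs, h⟩ := aux_surj (n := n) (fun s => rres k ((s : ℤ) - k))
    (fun s s' h h' e => by
      have := hi _ _ (by omega) (by omega) (by omega) (by omega) e
      omega)
    (fun s s' h h' => hb _ _ (by omega) (by omega) (by omega) (by omega)) (m : ZMod n)
  refine ⟨(s : ℤ) - k, by omega, by omega, ?_⟩
  intro d h1 h2
  constructor
  · intro e
    have e' := h.trans e
    exact (hi _ _ (by omega) (by omega) (by omega) (by omega) (aux_cast_eq e'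
      (hb _ _ (by omega) (by omega) (by omega) (by omega))
      (hb _ _ (by omega) (by omega) (by omega) (by omega)))).symm
  · rintro rfl
    exact h.symm

theorem aux_iff {n k : ℕ} (hn : 4 ≤ n) (hk : 2 ≤ k) (hkn : k ≤ n - 2) (m D : ℤ)
    (hD1 : -(k : ℤ) ≤ D) (hD2 : D ≤ (n : ℤ) - k - 1)
    (hD : ∀ d : ℤ, -(k : ℤ) ≤ d → d ≤ (n : ℤ) - k - 1 →
      ((m : ZMod n) = (rres k d : ZMod n) ↔ d = D)) (v : ↥(Lset k n m) → ℝ) :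
    v ∈ GammaPoly k n m ↔
      (Dmap k n m v + fun p => if ((p.1 : ℕ) : ℤ) - ((p.2 : ℕ) : ℤ) - 1 < D then 1 else 0) ∈
        GTPoly k n (by omega) (by omega) := by
  have hd1 : (m : ZMod n) = (((k + 1) / 2 : ℕ) : ZMod n) ↔ -(k : ℤ) = D := by
    rw [← hD _ (by omega) (by omega)]
    have : rres k (-(k : ℤ)) = (((k + 1) / 2 : ℕ) : ℤ) := by
      unfold rres; split_ifs <;> omega
    rw [this, Int.cast_natCast]
  have hd2 : (m : ZMod n) = (((n + k + 1) / 2 : ℕ) : ZMod n) ↔ (n : ℤ) - k - 1 = D := by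
    rw [← hD _ (by omega) (by omega)]
    have : ((((n + k + 1) / 2 : ℕ) : ℤ) : ZMod n) = (rres k ((n : ℤ) - k - 1) : ZMod n) := by
      rw [ZMod.intCast_eq_intCast_iff_dvd_sub]
      unfold rres
      split_ifs
      · exact ⟨-1, by omega⟩
      · exact ⟨0, by omega⟩
    rw [← this, Int.cast_natCast]
  have he : ∀ d : ℤ, -(k : ℤ) ≤ d → d ≤ (n : ℤ) - k - 1 →
      epsExpR n k m d = (if d - 1 < D then 1 else 0) - (if d < D then 1 else 0) := by
    intro d h1 h2
    rw [eps_eq]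
    simp only [hD d h1 h2]
    split_ifs <;> first | omega | norm_num
  unfold GammaPoly GTPoly
  simp only [Set.mem_ofPred_eq, hd1, hd2, Pi.add_apply]
  refine and_congr ?_ (and_congr ?_ (and_congr ?_ ?_))
  · simp only [Dmap, LinearMap.coe_mk, AddHom.coe_mk]
    rw [show k - 1 + 1 = k by omega, zero_add]
    by_cases h : -(k : ℤ) = D
    · rw [if_pos h, if_neg (by push_cast; omega)]; simp
    · rw [if_neg h, if_pos (by push_cast; omega)]; simp
  · simp only [Dmap, LinearMap.coe_mk, AddHom.coe_mk]
    rw [show n - k - 1 + 1 = n - k by omega, zero_add]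
    by_cases h : (n : ℤ) - k - 1 = D
    · rw [if_pos h, if_pos (by push_cast; omega)]
      constructor <;> intro <;> linarith
    · rw [if_neg h, if_neg (by push_cast; omega)]
      constructor <;> intro <;> linarith
  · constructor
    · intro h a b hb
      have h1 := h a (b + 1) (by omega) (by omega) (by omega)
      rw [he _ (by push_cast; omega) (by push_cast; omega)] at h1
      simp only [Dmap, LinearMap.coe_mk, AddHom.coe_mk]
      push_cast at h1 ⊢
      simp only [Nat.add_sub_cancel, sub_sub] at h1 ⊢
      linarith
    · intro h a b ha hb1 hb2
      have h1 := h ⟨a, by omega⟩ ⟨b - 1, by omega⟩ (by simp only; omega)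
      rw [he _ (by push_cast; omega) (by push_cast; omega)]
      simp only [Dmap, LinearMap.coe_mk, AddHom.coe_mk] at h1
      obtain ⟨b, rfl⟩ : ∃ c, b = c + 1 := ⟨b - 1, by omega⟩
      push_cast at h1 ⊢
      simp only [Nat.add_sub_cancel, sub_sub] at h1 ⊢
      linarith
  · constructor
    · intro h a b ha
      have h1 := h a (b + 1) (by omega) (by omega) (by omega) (by omega)
      rw [he _ (by push_cast; omega) (by push_cast; omega)] at h1
      simp only [Dmap, LinearMap.coe_mk, AddHom.coe_mk]
      obtain ⟨a, ha'⟩ := a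
      obtain ⟨a, rfl⟩ : ∃ c, a = c + 1 := ⟨a - 1, by simp only at ha; omega⟩
      have e1 : ((a : ℤ) + 1 - (b + 1) - 1) = (a : ℤ) - b - 1 := by ring
      have e2 : ((a : ℤ) + 1 - (b + 1)) = (a : ℤ) + 1 - b - 1 := by ring
      push_cast at h1 ⊢
      rw [e1, e2] at h1
      linarith
    · intro h a b ha1 ha2 hb1 hb2
      have h1 := h ⟨a, by omega⟩ ⟨b - 1, by omega⟩ (by simp only; omega)
      rw [he _ (by push_cast; omega) (by push_cast; omega)]
      simp only [Dmap, LinearMap.coe_mk, AddHom.coe_mk] at h1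
      obtain ⟨b, rfl⟩ : ∃ c, b = c + 1 := ⟨b - 1, by omega⟩
      obtain ⟨a, rfl⟩ : ∃ c, a = c + 1 := ⟨a - 1, by omega⟩
      have e1 : ((a : ℤ) + 1 - (b + 1) - 1) = (a : ℤ) - b - 1 := by ring
      have e2 : ((a : ℤ) + 1 - (b + 1)) = (a : ℤ) + 1 - b - 1 := by ring
      push_cast at h1 ⊢
      rw [e1, e2]
      linarith

theorem Dmap_inj {n k : ℕ} (hn : 4 ≤ n) (hk : 2 ≤ k) (hkn : k ≤ n - 2) (m : ℤ) :
    Function.Injective (Dmap k n m) := by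
  rw [injective_iff_map_eq_zero]
  intro v hv
  ext x
  have := aux_conn hn hk hkn m v ⊥ (fun a b ha hb => by
    have := congrFun hv (⟨a, ha⟩, ⟨b, hb⟩)
    simpa [Dmap] using this) x
  simpa using this

/-- the superpotential polytope of any rotated checkboard graph is
unimodular equivalent to the Gelfand–Tsetlin polytope `GT^1_{k,n}`. -/
theorem gamma_unimodular_equiv_GT
    (n k : ℕ) (hn : 4 ≤ n) (hk : 2 ≤ k) (hkn : k ≤ n - 2) (m : ℤ) :
    (Lset k n m).card = k * (n - k) ∧
    ∃ (M : (↥(Lset k n m) → ℝ) ≃ₗ[ℝ] (Fin (n - k) × Fin k → ℝ))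
      (t : Fin (n - k) × Fin k → ℝ),
      (∀ x, ∃ z : ℤ, t x = (z : ℝ)) ∧
      (∀ v : ↥(Lset k n m) → ℝ,
        (∀ x, ∃ z : ℤ, v x = (z : ℝ)) ↔ (∀ x, ∃ z : ℤ, M v x = (z : ℝ))) ∧
      (fun v => M v + t) '' (GammaPoly k n m) = GTPoly k n (by omega) (by omega) := by
  have hinj := Dmap_inj hn hk hkn m
  have hcard : (Lset k n m).card = k * (n - k) := by
    apply le_antisymm _ (aux_card_ge hn hk hkn m)
    have := LinearMap.finrank_le_finrank_of_injective hinj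
    simpa [mul_comm] using this
  refine ⟨hcard, ?_⟩
  obtain ⟨D, hD1, hD2, hD⟩ := exists_d hn hk hkn m
  have hfr : Module.finrank ℝ (↥(Lset k n m) → ℝ) =
      Module.finrank ℝ (Fin (n - k) × Fin k → ℝ) := by
    simp [hcard, mul_comm]
  refine ⟨LinearMap.linearEquivOfInjective (Dmap k n m) hinj hfr,
    fun p => if ((p.1 : ℕ) : ℤ) - ((p.2 : ℕ) : ℤ) - 1 < D then 1 else 0, ?_, ?_, ?_⟩
  · intro x
    simp only
    split_ifs
    · exact ⟨1, by simp⟩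
    · exact ⟨0, by simp⟩
  · intro v
    simp only [LinearMap.linearEquivOfInjective_apply]
    constructor
    · intro h p
      have hV : ∀ i j, ∃ z : ℤ, Vco k n m v i j = z := by
        intro i j
        unfold Vco
        split_ifs with hm
        · exact h _
        · exact ⟨0, by simp⟩
      obtain ⟨z, hz⟩ := hV p.1 (p.2 + 1)
      obtain ⟨w, hw⟩ := hV (p.1 + 1) p.2
      refine ⟨z - w, ?_⟩
      simp [Dmap, hz, hw]
    · intro h x
      have := aux_conn hn hk hkn m v (Int.castAddHom ℝ).range (fun a b ha hb => by
        obtain ⟨z, hz⟩ := h (⟨a, ha⟩, ⟨b, hb⟩)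
        exact ⟨z, hz.symm⟩) x
      obtain ⟨z, hz⟩ := this
      exact ⟨z, hz.symm⟩
  · ext f
    constructor
    · rintro ⟨v, hv, rfl⟩
      exact (aux_iff hn hk hkn m D hD1 hD2 hD v).1 hv
    · intro hf
      set E := LinearMap.linearEquivOfInjective (Dmap k n m) hinj hfr with hE
      set t : Fin (n - k) × Fin k → ℝ :=
        fun p => if ((p.1 : ℕ) : ℤ) - ((p.2 : ℕ) : ℤ) - 1 < D then 1 else 0 with ht
      have h1 : E (E.symm (f - t)) + t = f := by simp
      refine ⟨E.symm (f - t), ?_, h1⟩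
      refine (aux_iff hn hk hkn m D hD1 hD2 hD _).2 ?_
      have h2 : Dmap k n m (E.symm (f - t)) + t = f := h1
      rw [h2]
      exact hf
end
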